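/- Let A be an equidimensional complete local ring containing a field, of dimension d ≥ 2, with separably closed residue field. If the Lyubeznik numbers λ_{j,j+1}(A) vanish for all 0 ≤ j ≤ i for some i ≤ d−2, then the connectedness dimension of A satisfies c(A) ≥ i + 1. -/

import Mathlib

open IsLocalRing PrimeSpectrum CategoryTheory

noncomputable section

universe u

/-- The connectedness dimension of `A`: the minimal dimension of a closed subset
`Z = V(J)` of `Spec A` such that `Spec A \ Z` is disconnected (the empty space
counting as disconnected). -/
noncomputable def connDim (A : Type*) [CommRing A] : WithBot ℕ∞ :=
  sInf {d | ∃ J : Ideal A, ringKrullDim (A ⧸ J) = d ∧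
    ¬ IsConnected ((PrimeSpectrum.zeroLocus (J : Set A))ᶜ)}

/-- The module `Ext^i_R(k, H^{n-j}_I(R))` whose dimension over the residue field
`k` of `R` is the Lyubeznik number `λ_{i,j}` of `R/I`. -/
noncomputable def lyubeznikModule (R : Type u) [CommRing R] [IsLocalRing R]
    (I : Ideal R) (n i j : ℕ) : ModuleCat.{u} R :=
  ((_root_.Ext R (ModuleCat.{u} R) i).obj
    (Opposite.op (ModuleCat.of R (ResidueField R)))).obj
    ((localCohomology I (n - j)).obj (ModuleCat.of R R))

/-- The Lyubeznik number `λ_{i,j}` of `R/I`, i.e. the dimension of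
`Ext^i_R(k, H^{n-j}_I(R))` as a vector space over the residue field `k`, encoded as
the Krull dimension of its lattice of `R`-submodules (which agrees with the length
of the module, hence with the `k`-dimension, since the module is annihilated by the
maximal ideal). -/
noncomputable def lyubeznikNumber (R : Type u) [CommRing R] [IsLocalRing R]
    (I : Ideal R) (n i j : ℕ) : WithBot ℕ∞ :=
  Order.krullDim (Submodule R (lyubeznikModule R I n i j))

/-- `A` contains a field. -/
def ContainsField (A : Type*) [CommRing A] : Prop := ∃ F : Subring A, IsField F

/-- `R` is a regular local ring: Noetherian, local, and the maximal ideal is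
generated by `dim R` elements. -/
def IsRegularLocal (R : Type*) [CommRing R] [IsLocalRing R] [IsNoetherianRing R] : Prop :=
  ∃ s : Finset R, Ideal.span (s : Set R) = maximalIdeal R ∧
    ringKrullDim R = (s.card : ℕ)

namespace LyuConn

section CA

variable {R : Type u} [CommRing R]

lemma dimq_mono {F G : Ideal R} (h : F ≤ G) :
    ringKrullDim (R ⧸ G) ≤ ringKrullDim (R ⧸ F) :=
  ringKrullDim_le_of_surjective (Ideal.Quotient.factor h) (Ideal.Quotient.factor_surjective h)

lemma dimq_sup_span (F : Ideal R) (s : Set R) :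
    ringKrullDim ((R ⧸ F) ⧸ Ideal.span ((Ideal.Quotient.mk F) '' s)) =
      ringKrullDim (R ⧸ (F ⊔ Ideal.span s)) := by
  rw [← Ideal.map_span]
  exact ringKrullDim_eq_of_ringEquiv (DoubleQuot.quotQuotEquivQuotSup F (Ideal.span s))

variable [IsLocalRing R]

inductive RegChain : ℕ → Ideal R → Prop
  | zero : RegChain 0 ⊥
  | succ {g : ℕ} {F : Ideal R} {x : R} : RegChain g F → x ∈ maximalIdeal R →
      (∀ r, r * x ∈ F → r ∈ F) → RegChain (g + 1) (F ⊔ Ideal.span {x})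

lemma RegChain.le {g : ℕ} {F : Ideal R} (h : RegChain g F) : F ≤ maximalIdeal R := by
  induction h with
  | zero => exact bot_le
  | succ _ hx _ ih => exact sup_le ih ((Ideal.span_singleton_le_iff_mem _).2 hx)

lemma RegChain.dim {g : ℕ} {F : Ideal R} (h : RegChain g F) :
    ringKrullDim (R ⧸ F) + g ≤ ringKrullDim R := by
  induction h with
  | zero =>
    simp only [Nat.cast_zero, add_zero]
    exact ringKrullDim_le_of_surjective (Ideal.Quotient.mk _) Ideal.Quotient.mk_surjective
  | @succ g F x _ hx hr ih =>
    refine le_trans ?_ ih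
    have := ringKrullDim_quotient_succ_le_of_nonZeroDivisor (R := R ⧸ F)
      (r := Ideal.Quotient.mk F x) (by
        rw [mem_nonZeroDivisors_iff_right]
        intro z hz
        obtain ⟨z, rfl⟩ := Ideal.Quotient.mk_surjective z
        rw [← map_mul, Ideal.Quotient.eq_zero_iff_mem] at hz
        exact Ideal.Quotient.eq_zero_iff_mem.2 (hr z hz))
    have h2 := dimq_sup_span F {x}
    rw [Set.image_singleton] at h2
    rw [h2] at this
    push_cast
    rw [add_comm (g : WithBot ℕ∞) 1, ← add_assoc]
    gcongr

variable [IsNoetherianRing R]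

lemma dimq_le_add_card {F : Ideal R} (hF : F ≤ maximalIdeal R) (s : Finset R)
    (hs : (s : Set R) ⊆ maximalIdeal R) :
    ringKrullDim (R ⧸ F) ≤ ringKrullDim (R ⧸ (F ⊔ Ideal.span (s : Set R))) + s.card := by
  classical
  have : Nontrivial (R ⧸ F) := Ideal.Quotient.nontrivial_iff.2
    (fun h => (Ideal.IsPrime.ne_top (inferInstance : (maximalIdeal R).IsPrime))
      (top_le_iff.1 (h ▸ hF)))
  have : IsLocalRing (R ⧸ F) := .of_surjective' (Ideal.Quotient.mk F) Ideal.Quotient.mk_surjective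
  have h := ringKrullDim_le_ringKrullDim_quotient_add_card (R := R ⧸ F)
    (s := s.image (Ideal.Quotient.mk F)) (by
      rw [IsLocalRing.ringJacobson_eq_maximalIdeal]
      intro y hy
      simp only [Finset.coe_image, Set.mem_image] at hy
      obtain ⟨y, hy, rfl⟩ := hy
      have := hs hy
      simp only [SetLike.mem_coe, mem_maximalIdeal, mem_nonunits_iff] at this ⊢
      intro hu
      obtain ⟨z, hz⟩ := hu.exists_right_inv
      obtain ⟨z, rfl⟩ := Ideal.Quotient.mk_surjective z
      rw [← map_mul, ← map_one (Ideal.Quotient.mk F), Ideal.Quotient.eq] at hz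
      have h1 := hF hz
      have h2 : y * z ∈ maximalIdeal R := Ideal.mul_mem_right _ _ (hs hy)
      have h3 := sub_mem h2 h1
      simp at h3)
  rw [Finset.coe_image, dimq_sup_span] at h
  refine h.trans ?_
  gcongr
  exact Finset.card_image_le

/-- relative regularity -/
def Reg (F : Ideal R) (r : ℕ) : Prop :=
  ∃ s : Finset R, s.card ≤ r ∧ F ⊔ Ideal.span (s : Set R) = maximalIdeal R ∧
    ringKrullDim (R ⧸ F) = r

lemma Reg.step {F : Ideal R} {r : ℕ} (h : Reg F (r + 1)) :
    ∃ x ∈ maximalIdeal R, Reg (F ⊔ Ideal.span {x}) r ∧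
      ∀ Q ∈ F.minimalPrimes, x ∉ Q := by
  classical
  obtain ⟨s, hs, hm, hd⟩ := h
  have hF : F ≤ maximalIdeal R := hm ▸ le_sup_left
  have hsm : (s : Set R) ⊆ maximalIdeal R := by
    rw [← hm]; exact Ideal.subset_span.trans (SetLike.coe_subset_coe.2 le_sup_right)
  have hk : ringKrullDim (R ⧸ maximalIdeal R) = 0 := by
    let _ := Ideal.Quotient.field (maximalIdeal R)
    exact ringKrullDim_eq_zero_of_field _
  have hne : ∀ G : Ideal R, maximalIdeal R ≤ G → ringKrullDim (R ⧸ G) ≤ 0 := fun G hG =>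
    (dimq_mono hG).trans hk.le
  have h1 : ¬ maximalIdeal R ≤ F ⊔ maximalIdeal R * maximalIdeal R := by
    intro hle
    have := Submodule.le_of_le_smul_of_le_jacobson_bot (I := maximalIdeal R) (N := F)
      (N' := maximalIdeal R) (IsNoetherian.noetherian _)
      (IsLocalRing.maximalIdeal_le_jacobson _) hle
    have := hne F this
    rw [hd] at this
    norm_cast at this
  have h2 : ∀ Q ∈ F.minimalPrimes, ¬ maximalIdeal R ≤ Q := by
    intro Q hQ hle
    have hQp : Q.IsPrime := hQ.1.1
    have hQm : Q = maximalIdeal R := le_antisymm (le_maximalIdeal hQp.ne_top) hle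
    subst hQm
    have : ringKrullDim (R ⧸ F) ≤ 0 := by
      rw [ringKrullDim_quotient]
      rw [Order.krullDim_nonpos_iff_forall_isMin]
      intro p q hqp
      change q.1.asIdeal ≤ p.1.asIdeal at hqp
      change p.1.asIdeal ≤ q.1.asIdeal
      exact (le_maximalIdeal p.1.2.ne_top).trans
        (hQ.2 ⟨q.1.2, q.2⟩ (le_maximalIdeal q.1.2.ne_top))
    rw [hd] at this
    norm_cast at this
  have hfin : F.minimalPrimes.Finite := Ideal.finite_minimalPrimes_of_isNoetherianRing R F
  obtain ⟨x, hxm, hx1, hx2⟩ : ∃ x ∈ maximalIdeal R,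
      x ∉ F ⊔ maximalIdeal R * maximalIdeal R ∧ ∀ Q ∈ F.minimalPrimes, x ∉ Q := by
    by_contra hcon
    push Not at hcon
    have := (Ideal.subset_union_prime (s := insert (F ⊔ maximalIdeal R * maximalIdeal R)
      hfin.toFinset) (f := id) (F ⊔ maximalIdeal R * maximalIdeal R)
      (F ⊔ maximalIdeal R * maximalIdeal R) (I := maximalIdeal R) (by
        intro i hi hne _
        rcases Finset.mem_insert.1 hi with h | h
        · exact absurd h hne
        · exact ((hfin.mem_toFinset).1 h).1.1)).1 (by
        intro y hy
        simp only [Set.mem_iUnion]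
        by_cases hy1 : y ∈ F ⊔ maximalIdeal R * maximalIdeal R
        · exact ⟨_, by simp, hy1⟩
        · obtain ⟨Q, hQ, hyQ⟩ := hcon y hy hy1
          exact ⟨Q, by simp [hQ], hyQ⟩)
    obtain ⟨G, hG, hle⟩ := this
    rcases Finset.mem_insert.1 hG with h | h
    · exact h1 (h ▸ hle)
    · exact h2 G ((hfin.mem_toFinset).1 h) hle
  refine ⟨x, hxm, ?_, hx2⟩
  -- exchange
  have hx3 : x ∈ F ⊔ Ideal.span (s : Set R) := hm ▸ hxm
  obtain ⟨f, hf, w, hw, hfw⟩ := Submodule.mem_sup.1 hx3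
  obtain ⟨c, hc⟩ := Submodule.mem_span_finset'.1 hw
  obtain ⟨y, hy⟩ : ∃ y : s, c y ∉ maximalIdeal R := by
    by_contra hcon
    push Not at hcon
    apply hx1
    rw [← hfw]
    refine Submodule.add_mem_sup hf ?_
    rw [← hc]
    exact Ideal.sum_mem _ fun y _ => Ideal.mul_mem_mul (hcon y) (hsm y.2)
  have hyu : IsUnit (c y) := by simpa using hy
  have hgen : (F ⊔ Ideal.span {x}) ⊔ Ideal.span ((s.erase y : Finset R) : Set R)
      = maximalIdeal R := by
    apply le_antisymm
    · refine sup_le (sup_le hF ((Ideal.span_singleton_le_iff_mem _).2 hxm)) ?_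
      rw [Ideal.span_le]
      exact fun z hz => hsm (Finset.mem_of_mem_erase hz)
    · rw [← hm]
      refine sup_le (le_sup_left.trans le_sup_left) ?_
      rw [Ideal.span_le]
      set G := (F ⊔ Ideal.span {x}) ⊔ Ideal.span ((s.erase y : Finset R) : Set R)
      have hG : ∀ z ∈ s, z ≠ (y : R) → z ∈ G := fun z hz hzy =>
        (le_sup_right : _ ≤ G) (Ideal.subset_span (by simp [hz, hzy]))
      intro z hz
      by_cases hzy : z = (y : R)
      · rw [hzy]
        have h3 : c y • (y : R) ∈ G := by
          have h4 : c y • (y : R) = x - f - ∑ z ∈ Finset.univ.erase y, c z • (z : R) := by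
            rw [← hfw, ← hc, ← Finset.add_sum_erase _ _ (Finset.mem_univ y)]; ring
          rw [h4]
          refine sub_mem (sub_mem ?_ ?_) (Ideal.sum_mem _ fun z hz => ?_)
          · exact (le_sup_left : _ ≤ G) ((le_sup_right : _ ≤ F ⊔ Ideal.span {x})
              (Ideal.mem_span_singleton_self x))
          · exact (le_sup_left : _ ≤ G) ((le_sup_left : _ ≤ F ⊔ Ideal.span {x}) hf)
          · exact Ideal.mul_mem_left _ _ (hG _ z.2 fun h => (Finset.mem_erase.1 hz).1
              (Subtype.ext h))
        exact (Ideal.unit_mul_mem_iff_mem _ hyu).1 h3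
      · exact hG z hz hzy
  have hcard : (s.erase (y : R)).card ≤ r := by
    rw [Finset.card_erase_of_mem y.2]; omega
  refine ⟨s.erase y, hcard, hgen, le_antisymm ?_ ?_⟩
  · have := dimq_le_add_card (F := F ⊔ Ideal.span {x}) (hgen ▸ le_sup_left) (s.erase (y : R))
      (fun z hz => hsm (Finset.mem_of_mem_erase hz))
    rw [hgen, hk, zero_add] at this
    exact this.trans (by exact_mod_cast hcard)
  · have := dimq_le_add_card hF {x} (by simpa using hxm)
    rw [hd] at this
    have hsp : F ⊔ Ideal.span ((({x} : Finset R)) : Set R) = F ⊔ Ideal.span {x} := by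
      rw [Finset.coe_singleton]
    rw [hsp, Finset.card_singleton] at this
    push_cast at this
    exact ENat.WithBot.add_le_add_one_right_iff.1 this

lemma Reg.prime {F : Ideal R} {r : ℕ} (h : Reg F r) : F.IsPrime := by
  induction r generalizing F with
  | zero =>
    obtain ⟨s, hs, hm, hd⟩ := h
    have : s = ∅ := Finset.card_eq_zero.1 (by omega)
    subst this
    simp at hm
    rw [hm]; infer_instance
  | succ r ih =>
    obtain ⟨x, hxm, hr, hx⟩ := h.step
    have := ih hr
    obtain ⟨Q, hQ, hQle⟩ := Ideal.exists_minimalPrimes_le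
      (le_sup_left : F ≤ F ⊔ Ideal.span {x})
    have hQp : Q.IsPrime := hQ.1.1
    have hle : Q ≤ F := by
      apply Submodule.le_of_le_smul_of_le_jacobson_bot (I := maximalIdeal R)
        (IsNoetherian.noetherian _) (IsLocalRing.maximalIdeal_le_jacobson _)
      intro z hz
      obtain ⟨f, hf, w, hw, rfl⟩ := Submodule.mem_sup.1 (hQle hz)
      obtain ⟨c, rfl⟩ := Ideal.mem_span_singleton'.1 hw
      have h1 : c * x ∈ Q := (Ideal.add_mem_iff_right _ (hQ.1.2 hf)).1 hz
      have h2 : c ∈ Q := (hQp.mem_or_mem h1).resolve_right (hx Q hQ)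
      refine Submodule.add_mem_sup hf ?_
      rw [mul_comm]
      exact Ideal.mul_mem_mul hxm h2
    rwa [le_antisymm hQ.1.2 hle]

lemma Reg.chain {F : Ideal R} {r : ℕ} (h : Reg F r) {g : ℕ} (hg : RegChain g F) :
    RegChain (g + r) (maximalIdeal R) := by
  induction r generalizing F g with
  | zero =>
    obtain ⟨s, hs, hm, hd⟩ := h
    have : s = ∅ := Finset.card_eq_zero.1 (by omega)
    subst this
    simp at hm
    rwa [← hm]
  | succ r ih =>
    have hp := h.prime
    obtain ⟨x, hxm, hr, hx⟩ := h.step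
    have hxF : x ∉ F := hx F (by rw [Ideal.minimalPrimes_eq_subsingleton_self]; rfl)
    have := ih hr (RegChain.succ hg hxm fun c hc => (hp.mem_or_mem hc).resolve_right hxF)
    rwa [add_assoc, add_comm 1 r] at this

lemma RegChain.maximal {a : Ideal R} {n : ℕ} (hn : ringKrullDim R = n)
    (ha : a ≤ maximalIdeal R) :
    ∃ (g : ℕ) (F : Ideal R) (v : R), RegChain g F ∧ F ≤ a ∧ v ∉ F ∧ ∀ z ∈ a, v * z ∈ F := by
  classical
  have hbound : ∀ g, (∃ F : Ideal R, RegChain g F ∧ F ≤ a) → g ≤ n := by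
    rintro g ⟨F, hF, _⟩
    have h := hF.dim
    rw [hn] at h
    have : Nontrivial (R ⧸ F) := Ideal.Quotient.nontrivial_iff.2
      (fun h => (Ideal.IsPrime.ne_top (inferInstance : (maximalIdeal R).IsPrime))
        (top_le_iff.1 (h ▸ hF.le)))
    have h0 : 0 ≤ ringKrullDim (R ⧸ F) := ringKrullDim_nonneg_of_nontrivial
    have : (g : WithBot ℕ∞) ≤ n := by
      refine le_trans ?_ h
      calc (g : WithBot ℕ∞) = 0 + g := (zero_add _).symm
        _ ≤ _ := by gcongr
    exact_mod_cast this
  have hex : ∃ g, ∃ F : Ideal R, RegChain g F ∧ F ≤ a := ⟨0, ⊥, .zero, bot_le⟩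
  obtain ⟨g, ⟨F, hF, hFa⟩, hmax⟩ : ∃ g, (∃ F : Ideal R, RegChain g F ∧ F ≤ a) ∧
      ¬ (∃ F : Ideal R, RegChain (g + 1) F ∧ F ≤ a) := by
    refine ⟨Nat.findGreatest (fun g => ∃ F : Ideal R, RegChain g F ∧ F ≤ a) n, ?_, ?_⟩
    · exact Nat.findGreatest_spec (P := fun g => ∃ F : Ideal R, RegChain g F ∧ F ≤ a)
        (Nat.zero_le n) ⟨⊥, .zero, bot_le⟩
    · intro h
      have := Nat.le_findGreatest (P := fun g => ∃ F : Ideal R, RegChain g F ∧ F ≤ a)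
        (hbound _ h) h
      omega
  have hsub : (a : Set R) ⊆ ⋃ p ∈ (associatedPrimes.finite R (R ⧸ F)).toFinset, (p : Set R) := by
    intro x hx
    have : x ∈ ⋃ p ∈ associatedPrimes R (R ⧸ F), (p : Set R) := by
      rw [biUnion_associatedPrimes_eq_zero_divisors]
      by_contra hcon
      apply hmax
      refine ⟨F ⊔ Ideal.span {x}, .succ hF (ha hx) ?_,
        sup_le hFa ((Ideal.span_singleton_le_iff_mem _).2 hx)⟩
      intro r hr
      by_contra hrF
      apply hcon
      refine ⟨Ideal.Quotient.mk F r, fun h => hrF (Ideal.Quotient.eq_zero_iff_mem.1 h), ?_⟩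
      change Ideal.Quotient.mk F (x * r) = 0
      rw [Ideal.Quotient.eq_zero_iff_mem, mul_comm]
      exact hr
    simpa using this
  have := (Ideal.subset_union_prime (f := id) (a) (a) (by
    intro i hi _ _
    exact (((associatedPrimes.finite R (R ⧸ F)).mem_toFinset).1 hi).1)).1 hsub
  obtain ⟨Q, hQ, haQ⟩ := this
  have hQ : IsAssociatedPrime Q (R ⧸ F) := ((associatedPrimes.finite R (R ⧸ F)).mem_toFinset).1 hQ
  obtain ⟨hQp, y, hy⟩ := (isAssociatedPrime_iff).1 hQ
  obtain ⟨v, rfl⟩ := Ideal.Quotient.mk_surjective y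
  refine ⟨g, F, v, hF, hFa, ?_, ?_⟩
  · intro hv
    apply hQp.ne_top
    rw [hy, Ideal.Quotient.eq_zero_iff_mem.2 hv]
    ext; simp [Submodule.mem_colon_singleton]
  · intro z hz
    have h := haQ hz
    rw [id, hy, Submodule.mem_colon_singleton] at h
    have h' : Ideal.Quotient.mk F (z * v) = 0 := h
    rwa [Ideal.Quotient.eq_zero_iff_mem, mul_comm] at h'

end CA

end LyuConn

namespace LyuConn

section ExtFacts

open Abelian

variable {R : Type u} [CommRing R]

/-- vanishing of Ext -/
def V (R : Type u) [CommRing R] (M N : Type u) [AddCommGroup M] [Module R M]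
    [AddCommGroup N] [Module R N] (q : ℕ) : Prop :=
  ∀ x : Abelian.Ext (ModuleCat.of R M) (ModuleCat.of R N) q, x = 0

variable {M M' N A B C : Type u} [AddCommGroup M] [Module R M] [AddCommGroup N] [Module R N]
  [AddCommGroup M'] [Module R M']
  [AddCommGroup A] [Module R A] [AddCommGroup B] [Module R B] [AddCommGroup C] [Module R C]

lemma V.of_equiv_left {q : ℕ} (h : V R M N q) (e : M' ≃ₗ[R] M) : V R M' N q := by
  intro x
  have h1 : (Ext.mk₀ (ModuleCat.ofHom e.toLinearMap)).comp
      ((Ext.mk₀ (ModuleCat.ofHom e.symm.toLinearMap)).comp x (zero_add q)) (zero_add q) = x := by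
    rw [Ext.mk₀_comp_mk₀_assoc, ← ModuleCat.ofHom_comp]
    have : e.symm.toLinearMap ∘ₗ e.toLinearMap = LinearMap.id := by ext; simp
    rw [this]
    exact Ext.mk₀_id_comp x
  rw [← h1, h ((Ext.mk₀ (ModuleCat.ofHom e.symm.toLinearMap)).comp x (zero_add q)), Ext.comp_zero]

lemma ext_equiv_right {q : ℕ} (e : N ≃ₗ[R] A) :
    Nonempty (Ext (ModuleCat.of R M) (ModuleCat.of R N) q ≃+
      Ext (ModuleCat.of R M) (ModuleCat.of R A) q) := by
  refine ⟨AddEquiv.mk' ⟨fun x => x.comp (Ext.mk₀ (ModuleCat.ofHom e.toLinearMap)) (add_zero q),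
    fun x => x.comp (Ext.mk₀ (ModuleCat.ofHom e.symm.toLinearMap)) (add_zero q), fun x => ?_,
    fun x => ?_⟩ fun x y => ?_⟩
  · dsimp only
    rw [Ext.comp_assoc_of_third_deg_zero, Ext.mk₀_comp_mk₀, ← ModuleCat.ofHom_comp]
    have : e.symm.toLinearMap ∘ₗ e.toLinearMap = LinearMap.id := by ext; simp
    rw [this]
    exact Ext.comp_mk₀_id x
  · dsimp only
    rw [Ext.comp_assoc_of_third_deg_zero, Ext.mk₀_comp_mk₀, ← ModuleCat.ofHom_comp]
    have : e.toLinearMap ∘ₗ e.symm.toLinearMap = LinearMap.id := by ext; simp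
    rw [this]
    exact Ext.comp_mk₀_id x
  · exact Ext.add_comp _ _ _ (add_zero q)

lemma V.of_equiv_right {q : ℕ} (h : V R M N q) (e : N ≃ₗ[R] A) : V R M A q := by
  obtain ⟨E⟩ := ext_equiv_right (M := M) (q := q) e
  intro x
  rw [← E.apply_symm_apply x, h (E.symm x), map_zero]

section ses

variable (f : A →ₗ[R] B) (g : B →ₗ[R] C)

lemma ses (hf : Function.Injective f) (hg : Function.Surjective g) (h : Function.Exact f g) :
    (ModuleCat.shortComplexOfCompEqZero f g h.linearMap_comp_eq_zero).ShortExact :=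
  ModuleCat.shortComplex_shortExact _ h hf hg

variable {f g} (hf : Function.Injective f) (hg : Function.Surjective g) (h : Function.Exact f g)
include hf hg h

lemma V.cov3 {q : ℕ} (h1 : V R M B q) (h2 : V R M A (q + 1)) : V R M C q := by
  intro x
  obtain ⟨y, hy⟩ := Ext.covariant_sequence_exact₃ (ModuleCat.of R M) (ses f g hf hg h) x rfl
    (h2 _)
  rw [← hy, h1 y, Ext.zero_comp]

lemma V.contra2 {q : ℕ} (h1 : V R A M q) (h2 : V R C M q) : V R B M q := by
  intro x
  obtain ⟨y, hy⟩ := Ext.contravariant_sequence_exact₂ (ses f g hf hg h) (ModuleCat.of R M) x (h1 _)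
  rw [← hy, h2 y, Ext.comp_zero]

lemma V.contra3 {q : ℕ} (h1 : V R B M (q + 1)) (h2 : V R A M q) : V R C M (q + 1) := by
  intro x
  obtain ⟨y, hy⟩ := Ext.contravariant_sequence_exact₃ (ses f g hf hg h) (ModuleCat.of R M) x (h1 _)
    (add_comm 1 q)
  rw [← hy, h2 y, Ext.comp_zero]

end ses

lemma smul_ext_eq_zero {q : ℕ} {r : R} (hr : ∀ z : M, r • z = 0)
    (x : Ext (ModuleCat.of R M) (ModuleCat.of R N) q) : r • x = 0 := by
  have h0 : r • 𝟙 (ModuleCat.of R M) = 0 := by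
    ext z
    exact hr z
  have : r • x = (Ext.mk₀ (r • 𝟙 (ModuleCat.of R M))).comp x (zero_add q) := by
    simp [Ext.mk₀_smul]
  rw [this, h0, Ext.mk₀_zero, Ext.zero_comp]

/-- depth statement -/
def D (R : Type u) [CommRing R] (M N : Type u) [AddCommGroup M] [Module R M]
    [AddCommGroup N] [Module R N] (q : ℕ) : Prop :=
  (∀ p < q, V R M N p) ∧ ¬ V R M N q

section rees

variable {r : R} {g : B →ₗ[R] C} (hf : ∀ z : B, r • z = 0 → z = 0) (hg : Function.Surjective g)
  (h : ∀ z, g z = 0 ↔ ∃ y, r • y = z) (hr : ∀ z : M, r • z = 0)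
include hf hg h

lemma ses_smul : Function.Injective (r • (LinearMap.id : B →ₗ[R] B)) ∧
    Function.Exact (r • (LinearMap.id : B →ₗ[R] B)) g := by
  refine ⟨?_, ?_⟩
  · rw [← LinearMap.ker_eq_bot, LinearMap.ker_eq_bot']
    exact fun z hz => hf z hz
  · intro z
    rw [h]
    rfl

include hr

lemma rees_step {q : ℕ} (hV : ∀ p < q, V R M C p) : ∀ p < q + 1, V R M B p := by
  obtain ⟨hi, he⟩ := ses_smul hf hg h
  intro p hp x
  have hx : x.comp (Ext.mk₀ (ModuleCat.ofHom (r • (LinearMap.id : B →ₗ[R] B)))) (add_zero p)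
      = 0 := by
    rw [← smul_ext_eq_zero hr x, Ext.smul_eq_comp_mk₀]
    rfl
  cases p with
  | zero =>
    have := (ses _ g hi hg he).mono_f
    apply Ext.postcomp_mk₀_injective_of_mono (ModuleCat.of R M)
      (ModuleCat.ofHom (r • (LinearMap.id : B →ₗ[R] B)))
    simp only [map_zero]
    exact hx
  | succ p =>
    obtain ⟨y, hy⟩ := Ext.covariant_sequence_exact₁ (ModuleCat.of R M) (ses _ g hi hg he) x hx rfl
    rw [← hy, hV p (by omega) y, Ext.zero_comp]

lemma rees_D {q : ℕ} (hD : D R M C q) : D R M B (q + 1) := by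
  have h1 := rees_step hf hg h hr hD.1
  obtain ⟨hi, he⟩ := ses_smul hf hg h
  exact ⟨h1, fun h2 => hD.2 (V.cov3 hi hg he (h1 q (by omega)) h2)⟩

end rees

section chain

variable [IsLocalRing R]

lemma chain_data {F : Ideal R} {x : R} (hr : ∀ r, r * x ∈ F → r ∈ F) :
    (∀ z : R ⧸ F, x • z = 0 → z = 0) ∧
    Function.Surjective (Submodule.factor (le_sup_left : F ≤ F ⊔ Ideal.span {x})) ∧
    ∀ z, Submodule.factor (le_sup_left : F ≤ F ⊔ Ideal.span {x}) z = 0 ↔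
      ∃ y : R ⧸ F, x • y = z := by
  refine ⟨fun z hz => ?_, Submodule.factor_surjective _, fun z => ?_⟩
  · obtain ⟨z, rfl⟩ := Submodule.Quotient.mk_surjective _ z
    rw [← Submodule.Quotient.mk_smul, Submodule.Quotient.mk_eq_zero] at hz
    rw [Submodule.Quotient.mk_eq_zero]
    exact hr z (by rwa [mul_comm])
  · obtain ⟨z, rfl⟩ := Submodule.Quotient.mk_surjective _ z
    constructor
    · intro hz
      have hz : z ∈ F ⊔ Ideal.span {x} := by
        exact (Submodule.Quotient.mk_eq_zero _).1 hz
      obtain ⟨f, hf, w, hw, rfl⟩ := Submodule.mem_sup.1 hz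
      obtain ⟨c, rfl⟩ := Ideal.mem_span_singleton'.1 hw
      refine ⟨Submodule.Quotient.mk c, ?_⟩
      rw [← Submodule.Quotient.mk_smul, Submodule.Quotient.eq]
      have : x • c - (f + c * x) = - f := by rw [smul_eq_mul]; ring
      rw [this]
      exact neg_mem hf
    · rintro ⟨y, hy⟩
      rw [← hy, map_smul]
      obtain ⟨y, rfl⟩ := Submodule.Quotient.mk_surjective _ y
      change Submodule.Quotient.mk (x • y) = 0
      rw [Submodule.Quotient.mk_eq_zero]
      exact Ideal.mul_mem_right _ _ ((le_sup_right : _ ≤ F ⊔ Ideal.span {x})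
        (Ideal.mem_span_singleton_self x))

/-- R mod zero -/
def botEquiv : (R ⧸ (⊥ : Ideal R)) ≃ₗ[R] R := Submodule.quotEquivOfEqBot ⊥ rfl

lemma RegChain.D {g : ℕ} {F : Ideal R} (h : RegChain g F) (hM : ∀ x ∈ F, ∀ z : M, x • z = 0)
    {q : ℕ} (hD : D R M (R ⧸ F) q) : LyuConn.D R M R (q + g) := by
  induction h generalizing q with
  | zero => exact ⟨fun p hp => (hD.1 p hp).of_equiv_right botEquiv,
      fun h => hD.2 (h.of_equiv_right botEquiv.symm)⟩
  | @succ g F x hc hx hr ih =>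
    obtain ⟨h1, h2, h3⟩ := chain_data hr
    have := ih (fun x hx => hM x ((le_sup_left : F ≤ _) hx)) (rees_D h1 h2 h3
      (hM x ((le_sup_right : _ ≤ F ⊔ Ideal.span {x}) (Ideal.mem_span_singleton_self x))) hD)
    rwa [add_assoc, add_comm 1 g] at this

lemma RegChain.V_quot {g : ℕ} {F : Ideal R} (h : RegChain g F) {q : ℕ} (hq : g < q) :
    V R (R ⧸ F) R q := by
  induction h generalizing q with
  | zero =>
    obtain ⟨q, rfl⟩ : ∃ r, q = r + 1 := ⟨q - 1, by omega⟩
    have : V R R R (q + 1) := fun x => by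
      have : Projective (ModuleCat.of R R) := 
        ModuleCat.projective_of_free (Module.Basis.singleton PUnit.{1} R)
      exact Ext.eq_zero_of_projective x
    exact this.of_equiv_left botEquiv
  | @succ g F x hc hx hr ih =>
    obtain ⟨h1, h2, h3⟩ := chain_data hr
    obtain ⟨hi, he⟩ := ses_smul h1 h2 h3
    obtain ⟨q, rfl⟩ : ∃ r, q = r + 1 := ⟨q - 1, by omega⟩
    exact V.contra3 hi h2 he (ih (by omega)) (ih (by omega))

lemma D_k {n : ℕ} (h : RegChain n (maximalIdeal R)) : D R (R ⧸ maximalIdeal R) R n := by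
  have := h.D (M := R ⧸ maximalIdeal R) (q := 0) (fun x hx z => by
    obtain ⟨z, rfl⟩ := Submodule.Quotient.mk_surjective _ z
    rw [← Submodule.Quotient.mk_smul, Submodule.Quotient.mk_eq_zero]
    exact Ideal.mul_mem_right _ _ hx) ⟨by simp, fun h => by
      have := h (Ext.mk₀ (𝟙 _))
      rw [Ext.mk₀_eq_zero_iff] at this
      have h2 : (Submodule.Quotient.mk 1 : R ⧸ maximalIdeal R) = 0 :=
        congrArg (fun f => ModuleCat.Hom.hom f (Submodule.Quotient.mk 1 : R ⧸ maximalIdeal R)) this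
      rw [Submodule.Quotient.mk_eq_zero] at h2
      exact (Ideal.ne_top_iff_one _).1 (Ideal.IsPrime.ne_top inferInstance) h2⟩
  rwa [zero_add] at this

variable [IsNoetherianRing R]

/-- finite length devissage -/
lemma V_finlen {X : Type u} [AddCommGroup X] [Module R X] {j : ℕ}
    (hk : V R (R ⧸ maximalIdeal R) X j) (M : Type u) [AddCommGroup M] [Module R M]
    [hfin : Module.Finite R M] (t : ℕ) (hM : ∀ x ∈ maximalIdeal R ^ t, ∀ z : M, x • z = 0) :
    V R M X j := by
  revert hM
  induction hfin using IsNoetherianRing.induction_on_isQuotientEquivQuotientPrime R with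
  | subsingleton N =>
    intro _ x
    have : 𝟙 (ModuleCat.of R N) = 0 := by
      ext z
      exact Subsingleton.elim (α := N) _ _
    rw [← Ext.mk₀_id_comp x, this, Ext.mk₀_zero, Ext.zero_comp]
  | quotient N p e =>
    intro hM
    have : p.asIdeal = maximalIdeal R := by
      refine le_antisymm (le_maximalIdeal p.2.ne_top) (p.2.le_of_pow_le (n := t) fun x hx => ?_)
      have := congrArg e (hM x hx (e.symm (Submodule.Quotient.mk 1)))
      rw [map_smul, e.apply_symm_apply, map_zero, ← Submodule.Quotient.mk_smul,
        Submodule.Quotient.mk_eq_zero, smul_eq_mul, mul_one] at this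
      exact this
    rw [← this] at hk
    exact hk.of_equiv_left e
  | exact N₁ N₂ N₃ f g hf hg hfg h₁ h₃ =>
    intro hM
    refine V.contra2 hf hg hfg (h₁ fun x hx z => hf ?_) (h₃ fun x hx z => ?_)
    · rw [map_smul, hM x hx, map_zero]
    · obtain ⟨z, rfl⟩ := hg z
      rw [← map_smul, hM x hx, map_zero]

lemma V_nak {p : Ideal R} (hp : p.IsPrime) {x : R} (hxm : x ∈ maximalIdeal R) (hx : x ∉ p)
    {q : ℕ} (hV : V R (R ⧸ (p ⊔ Ideal.span {x})) R (q + 1)) : V R (R ⧸ p) R q := by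
  obtain ⟨h1, h2, h3⟩ := chain_data (F := p) (x := x) fun r hr =>
    (hp.mem_or_mem hr).resolve_right hx
  obtain ⟨hi, he⟩ := ses_smul h1 h2 h3
  have hsurj : ∀ y : Ext (ModuleCat.of R (R ⧸ p)) (ModuleCat.of R R) q, ∃ y', x • y' = y := by
    intro y
    obtain ⟨y', hy'⟩ := Ext.contravariant_sequence_exact₁ (ses _ _ hi h2 he) (ModuleCat.of R R) y
      (add_comm 1 q) (hV _)
    refine ⟨y', ?_⟩
    rw [← hy']
    have : x • y' = (Ext.mk₀ (x • 𝟙 (ModuleCat.of R (R ⧸ p)))).comp y' (zero_add q) := by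
      simp [Ext.mk₀_smul]
    rw [this]
    rfl
  have hbot : (⊤ : Submodule R (Ext (ModuleCat.of R (R ⧸ p)) (ModuleCat.of R R) q)) = ⊥ := by
    apply Submodule.eq_bot_of_le_smul_of_le_jacobson_bot (maximalIdeal R) _
      (IsNoetherian.noetherian _) _ (IsLocalRing.maximalIdeal_le_jacobson _)
    rintro y -
    obtain ⟨y', rfl⟩ := hsurj y
    exact Submodule.smul_mem_smul hxm trivial
  intro y
  exact (Submodule.mem_bot R).1 (hbot ▸ Submodule.mem_top)

lemma V_dim_step {n e : ℕ} (hc : RegChain n (maximalIdeal R))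
    (IH : ∀ c : Ideal R, c ≤ maximalIdeal R → ringKrullDim (R ⧸ c) + 1 ≤ e →
      ∀ q, q + e ≤ n → V R (R ⧸ c) R q)
    (c : Ideal R) (hce : ringKrullDim (R ⧸ c) ≤ e)
    (M : Type u) [AddCommGroup M] [Module R M] [hfin : Module.Finite R M]
    (hM : ∀ x ∈ c, ∀ z : M, x • z = 0) (q : ℕ) (hq : q + e < n) : V R M R q := by
  revert hM
  induction hfin using IsNoetherianRing.induction_on_isQuotientEquivQuotientPrime R with
  | subsingleton N =>
    intro _ x
    have : 𝟙 (ModuleCat.of R N) = 0 := by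
      ext z
      exact Subsingleton.elim (α := N) _ _
    rw [← Ext.mk₀_id_comp x, this, Ext.mk₀_zero, Ext.zero_comp]
  | quotient N p e' =>
    intro hM
    have hcp : c ≤ p.asIdeal := fun x hx => by
      have := congrArg e' (hM x hx (e'.symm (Submodule.Quotient.mk 1)))
      rw [map_smul, e'.apply_symm_apply, map_zero, ← Submodule.Quotient.mk_smul,
        Submodule.Quotient.mk_eq_zero, smul_eq_mul, mul_one] at this
      exact this
    refine V.of_equiv_left ?_ e'
    have hpm := le_maximalIdeal p.2.ne_top
    by_cases hmp : maximalIdeal R ≤ p.asIdeal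
    · have := le_antisymm hpm hmp
      rw [this]
      exact (D_k hc).1 q (by omega)
    · obtain ⟨x, hxm, hxp⟩ := Set.not_subset.1 hmp
      refine V_nak p.2 hxm hxp (IH _ (sup_le hpm ((Ideal.span_singleton_le_iff_mem _).2 hxm))
        ?_ _ (by omega))
      refine le_trans ?_ ((dimq_mono hcp).trans hce)
      have := ringKrullDim_quotient_succ_le_of_nonZeroDivisor (R := R ⧸ p.asIdeal)
        (r := Ideal.Quotient.mk p.asIdeal x) (mem_nonZeroDivisors_of_ne_zero
          (fun h => hxp (Ideal.Quotient.eq_zero_iff_mem.1 h)))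
      have h2 := dimq_sup_span p.asIdeal {x}
      rw [Set.image_singleton] at h2
      rwa [h2] at this
  | exact N₁ N₂ N₃ f g hf hg hfg h₁ h₃ =>
    intro hM
    refine V.contra2 hf hg hfg (h₁ fun x hx z => hf ?_) (h₃ fun x hx z => ?_)
    · rw [map_smul, hM x hx, map_zero]
    · obtain ⟨z, rfl⟩ := hg z
      rw [← map_smul, hM x hx, map_zero]

lemma V_dim {n : ℕ} (hc : RegChain n (maximalIdeal R)) (e : ℕ) (c : Ideal R)
    (hce : ringKrullDim (R ⧸ c) ≤ e)
    (M : Type u) [AddCommGroup M] [Module R M] [Module.Finite R M]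
    (hM : ∀ x ∈ c, ∀ z : M, x • z = 0) (q : ℕ) (hq : q + e < n) : V R M R q := by
  induction e generalizing c M q with
  | zero =>
    refine V_dim_step hc ?_ c hce M hM q hq
    intro c hcm hc1
    exfalso
    have : Nontrivial (R ⧸ c) := Ideal.Quotient.nontrivial_iff.2
      (fun h => (Ideal.IsPrime.ne_top (inferInstance : (maximalIdeal R).IsPrime))
        (top_le_iff.1 (h ▸ hcm)))
    have h0 : 0 ≤ ringKrullDim (R ⧸ c) := ringKrullDim_nonneg_of_nontrivial
    have : (0 : WithBot ℕ∞) + 1 ≤ (0 : ℕ) := le_trans (by gcongr) hc1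
    norm_cast at this
  | succ e ih =>
    refine V_dim_step hc ?_ c hce M hM q hq
    intro c hcm hc1 q hq
    push_cast at hc1
    refine ih c (ENat.WithBot.add_le_add_one_right_iff.1 hc1) (R ⧸ c) ?_ q (by omega)
    intro x hx z
    obtain ⟨z, rfl⟩ := Submodule.Quotient.mk_surjective _ z
    rw [← Submodule.Quotient.mk_smul, Submodule.Quotient.mk_eq_zero]
    exact Ideal.mul_mem_right _ _ hx

end chain

end ExtFacts

end LyuConn

namespace LyuConn

section Chase

variable {R : Type u} [CommRing R] {P : ℕ → Type u} [∀ p, AddCommGroup (P p)]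
  [∀ p, Module R (P p)] {J : ℕ → Type u} [∀ q, AddCommGroup (J q)] [∀ q, Module R (J q)]

lemma lift_lemma {Q A B : Type u} [AddCommGroup Q] [Module R Q] [Module.Projective R Q]
    [AddCommGroup A] [Module R A] [AddCommGroup B] [Module R B] (D : A →ₗ[R] B)
    (S : Submodule R A) (f : Q →ₗ[R] B) (hf : ∀ z, ∃ y ∈ S, D y = f z) :
    ∃ h : Q →ₗ[R] A, (∀ z, h z ∈ S) ∧ ∀ z, D (h z) = f z := by
  let T := S.map D
  let g : S →ₗ[R] T := D.restrict (fun x hx => Submodule.mem_map_of_mem hx)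
  have hg : Function.Surjective g := by
    rintro ⟨_, y, hy, rfl⟩
    exact ⟨⟨y, hy⟩, rfl⟩
  let f' : Q →ₗ[R] T := f.codRestrict T (fun z => by
    obtain ⟨y, hy, h⟩ := hf z
    exact ⟨y, hy, h⟩)
  obtain ⟨h, hh⟩ := Module.projective_lifting_property g f' hg
  refine ⟨S.subtype ∘ₗ h, fun z => (h z).2, fun z => ?_⟩
  have := congrArg Subtype.val (LinearMap.congr_fun hh z)
  exact this

variable (b : ∀ p, P (p + 1) →ₗ[R] P p) (d : ∀ q, J q →ₗ[R] J (q + 1))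

/-- iterated relation to a given top map -/
inductive Rel {m : ℕ} (φ : P 0 →ₗ[R] J (m + 1)) : ∀ p q, (P p →ₗ[R] J q) → Prop
  | zero (u : P 0 →ₗ[R] J m) : (∀ z, d m (u z) = φ z) → Rel φ 0 m u
  | succ {p q : ℕ} (u : P p →ₗ[R] J (q + 1)) (u' : P (p + 1) →ₗ[R] J q) : Rel φ p (q + 1) u →
      (∀ z, d q (u' z) = u (b p z)) → Rel φ (p + 1) q u'

lemma Rel.congr {m : ℕ} {φ : P 0 →ₗ[R] J (m + 1)} {p q : ℕ} {u v : P p →ₗ[R] J q}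
    (h : Rel b d φ p q u) (huv : ∀ z, d q (v z) = d q (u z)) : Rel b d φ p q v := by
  cases h with
  | zero u hu => exact .zero _ fun z => (huv z).trans (hu z)
  | succ u u' h1 h2 => exact .succ u _ h1 fun z => (huv z).trans (h2 z)

lemma Rel.descend (hJ : ∀ q, Module.Injective R (J q))
    (hb : ∀ p z, b p z = 0 → ∃ y, b (p + 1) y = z) (hdd : ∀ q z, d (q + 1) (d q z) = 0)
    {m : ℕ} {φ : P 0 →ₗ[R] J (m + 1)} {p q : ℕ} {u : P p →ₗ[R] J q}
    (h : Rel b d φ p q u) (hu : ∀ z, u (b p z) = 0) :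
    ∃ u0 : P 0 →ₗ[R] J m, (∀ z, d m (u0 z) = φ z) ∧ ∀ z, u0 (b 0 z) = 0 := by
  induction p generalizing q with
  | zero =>
    cases h with
    | zero u h => exact ⟨u, h, hu⟩
  | succ p ih =>
    cases h with
    | succ u u' h1 h2 =>
    rename_i u'
    have hker : LinearMap.ker (b p) ≤ LinearMap.ker u' := by
      intro z hz
      obtain ⟨y, rfl⟩ := hb p z hz
      exact hu y
    let f : (P (p + 1) ⧸ LinearMap.ker (b p)) →ₗ[R] P p := (LinearMap.ker (b p)).liftQ (b p) le_rfl
    have hf : Function.Injective f := by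
      rw [← LinearMap.ker_eq_bot]
      exact Submodule.ker_liftQ_eq_bot _ _ _ le_rfl
    obtain ⟨y, hy⟩ := (hJ q).out f hf ((LinearMap.ker (b p)).liftQ u' hker)
    have hy' : ∀ z, y (b p z) = u' z := fun z => by
      have := hy (Submodule.Quotient.mk z)
      simpa [f] using this
    refine ih (q := q + 1) (u := u - d q ∘ₗ y) (h1.congr b d fun z => by simp [hdd]) fun z => ?_
    simp [hy', h2]

/-- existence of a tower of lifts -/
def Tow (G : ∀ q, Submodule R (J q)) : ∀ (_ p q : ℕ), (P p →ₗ[R] J q) → Prop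
  | 0, _, _, _ => True
  | _ + 1, _, 0, _ => False
  | K + 1, p, q + 1, h => ∃ h' : P (p + 1) →ₗ[R] J q, (∀ z, h' z ∈ G q) ∧
      (∀ z, d q (h' z) = h (b p z)) ∧ Tow G K (p + 1) q h'

lemma Tow.congr {G : ∀ q, Submodule R (J q)} {K p q : ℕ} {h k : P p →ₗ[R] J q}
    (hT : Tow b d G K p q h) (hhk : ∀ z, k (b p z) = h (b p z)) : Tow b d G K p q k := by
  cases K with
  | zero => trivial
  | succ K =>
    cases q with
    | zero => exact hT.elim
    | succ q =>
      obtain ⟨h', h1, h2, h3⟩ := hT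
      exact ⟨h', h1, fun z => (h2 z).trans (hhk z).symm, h3⟩

lemma Tow.sub (hbb : ∀ p z, b p (b (p + 1) z) = 0) {G : ∀ q, Submodule R (J q)} {K p q : ℕ}
    {h : P p →ₗ[R] J (q + 1)} (hT : Tow b d G K p (q + 1) h)
    (k : P p →ₗ[R] J (q + 1)) (v : P p →ₗ[R] J q) (hv : ∀ z, v z ∈ G q) (hk : ∀ z, k (b p z) = h (b p z) - d q (v (b p z))) :
    Tow b d G K p (q + 1) k := by
  cases K with
  | zero => trivial
  | succ K =>
    obtain ⟨h', h1, h2, h3⟩ := hT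
    refine ⟨h' - v ∘ₗ b p, fun z => sub_mem (h1 z) (hv _), fun z => ?_, h3.congr b d fun z => ?_⟩
    · simp [hk, h2]
    · simp [hbb]

lemma Tow.mono {G : ∀ q, Submodule R (J q)} {K L p q : ℕ} (hKL : K ≤ L)
    {h : P p →ₗ[R] J q} (hT : Tow b d G L p q h) : Tow b d G K p q h := by
  induction K generalizing L p q with
  | zero => trivial
  | succ K ih =>
    obtain ⟨L, rfl⟩ : ∃ L', L = L' + 1 := ⟨L - 1, by omega⟩
    cases q with
    | zero => exact hT.elim
    | succ q =>
      obtain ⟨h', h1, h2, h3⟩ := hT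
      exact ⟨h', h1, h2, ih (by omega) h3⟩

theorem chase [∀ p, Module.Projective R (P p)] (hJ : ∀ q, Module.Injective R (J q))
    (hbb : ∀ p z, b p (b (p + 1) z) = 0)
    (hb : ∀ p z, b p z = 0 → ∃ y, b (p + 1) y = z) (hdd : ∀ q z, d (q + 1) (d q z) = 0)
    (m i : ℕ) (him : i + 1 ≤ m) (φ : P 0 →ₗ[R] J (m + 1))
    (Ga Gb GI : ∀ q, Submodule R (J q)) (hGad : ∀ q, ∀ z ∈ Ga q, d q z ∈ Ga (q + 1))
    (hGbd : ∀ q, ∀ z ∈ Gb q, d q z ∈ Gb (q + 1))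
    (hGaI : ∀ q, Ga q ≤ GI q) (hGbI : ∀ q, Gb q ≤ GI q)
    (hsplit : ∀ q, ∀ z ∈ GI q, ∃ x ∈ Ga q, ∃ y ∈ Gb q, z = x - y)
    (hA : ∃ h : P 0 →ₗ[R] J m, (∀ z, h z ∈ Ga m) ∧ (∀ z, d m (h z) = φ z) ∧
      Tow b d Ga (i + 1) 0 m h)
    (hB : ∃ h : P 0 →ₗ[R] J m, (∀ z, h z ∈ Gb m) ∧ (∀ z, d m (h z) = φ z) ∧
      Tow b d Gb (i + 1) 0 m h)
    (H0 : ∀ r, r + 1 = m → ∀ w : P 0 →ₗ[R] J (r + 1), (∀ z, w z ∈ GI (r + 1)) →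
      (∀ z, d _ (w z) = 0) → (∀ z, ∃ y ∈ GI r, d r y = w (b 0 z)) →
      ∀ z, ∃ y ∈ GI r, d r y = w z)
    (Hs : ∀ j r, j + 1 + r + 1 = m → j + 1 ≤ i → ∀ w : P (j + 1) →ₗ[R] J (r + 1),
      (∀ z, w z ∈ GI (r + 1)) →
      (∀ z, d _ (w z) = 0) → (∀ z, ∃ y ∈ GI r, d r y = w (b (j + 1) z)) →
      ∃ w' : P j →ₗ[R] J (r + 1), (∀ z, w' z ∈ GI (r + 1)) ∧ (∀ z, d _ (w' z) = 0) ∧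
      ∀ z, ∃ y ∈ GI r, d r y = w z - w' (b j z))
    (Hab0 : ∀ z, d 0 z = 0 → z ∈ Ga 0 → z ∈ Gb 0 → z = 0)
    (Hab : ∀ q, q + 1 + i ≤ m → ∀ z, d (q + 1) z = 0 → z ∈ Ga (q + 1) → z ∈ Gb (q + 1) →
      ∃ y, y ∈ Ga q ∧ y ∈ Gb q ∧ d q y = z) :
    ∃ u0 : P 0 →ₗ[R] J m, (∀ z, d m (u0 z) = φ z) ∧ ∀ z, u0 (b 0 z) = 0 := by
  have split : ∀ {p q} (v : P p →ₗ[R] J q), (∀ z, v z ∈ GI q) → ∃ x y : P p →ₗ[R] J q,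
      (∀ z, x z ∈ Ga q) ∧ (∀ z, y z ∈ Gb q) ∧ ∀ z, v z = x z - y z := by
    intro p q v hv
    obtain ⟨h, h1, h2⟩ := lift_lemma (LinearMap.fst R (J q) (J q) - LinearMap.snd R (J q) (J q))
      ((Ga q).prod (Gb q)) v (fun z => by
        obtain ⟨x, hx, y, hy, hxy⟩ := hsplit q _ (hv z)
        exact ⟨(x, y), ⟨hx, hy⟩, by simp [hxy]⟩)
    exact ⟨LinearMap.fst R _ _ ∘ₗ h, LinearMap.snd R _ _ ∘ₗ h, fun z => (h1 z).1,
      fun z => (h1 z).2, fun z => by rw [← h2]; simp⟩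
  -- invariants up to i
  have inv : ∀ p, p ≤ i → ∀ q, p + q = m → ∃ u : P p →ₗ[R] J q, (∀ z, u z ∈ Ga q) ∧
      (∀ z, u z ∈ Gb q) ∧ Rel b d φ p q u ∧ Tow b d Ga (i + 1 - p) p q u ∧
      Tow b d Gb (i + 1 - p) p q u := by
    intro p
    induction p with
    | zero =>
      rintro - q hq
      obtain rfl : q = m := by omega
      obtain ⟨r, rfl⟩ : ∃ r, q = r + 1 := ⟨q - 1, by omega⟩
      obtain ⟨h, h1, h2, h3⟩ := hA
      obtain ⟨k, k1, k2, k3⟩ := hB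
      have hw := H0 r rfl (h - k) (fun z => sub_mem (hGaI _ (h1 z)) (hGbI _ (k1 z)))
        (fun z => by simp [h2, k2]) (fun z => by
          obtain ⟨h', h1', h2', -⟩ := h3
          obtain ⟨k', k1', k2', -⟩ := k3
          exact ⟨h' z - k' z, sub_mem (hGaI _ (h1' z)) (hGbI _ (k1' z)), by simp [h2', k2']⟩)
      obtain ⟨v, v1, v2⟩ := lift_lemma (d r) (GI r) (h - k) hw
      obtain ⟨x, y, hx, hy, hxy⟩ := split v v1
      have key : ∀ z, h z - d r (x z) = k z - d r (y z) := fun z => by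
        have := v2 z
        rw [hxy, map_sub, LinearMap.sub_apply] at this
        rw [sub_eq_sub_iff_sub_eq_sub, ← this]
      refine ⟨h - d r ∘ₗ x, fun z => sub_mem (h1 z) (hGad _ _ (hx z)), fun z => ?_,
        .zero _ fun z => by simp [hdd, h2], ?_, ?_⟩
      · simp only [LinearMap.sub_apply, LinearMap.comp_apply]
        rw [key]
        exact sub_mem (k1 z) (hGbd _ _ (hy z))
      · exact Tow.sub b d hbb h3 _ x hx fun z => by simp
      · exact Tow.sub b d hbb k3 _ y hy fun z => by simp [key]
    | succ p ih =>
      intro hp q hq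
      obtain ⟨u, ua, ub, uR, hTa, hTb⟩ := ih (by omega) (q + 1) (by omega)
      obtain ⟨r, rfl⟩ : ∃ r, q = r + 1 := ⟨q - 1, by omega⟩
      have hK : i + 1 - p = (i + 1 - (p + 1)) + 1 := by omega
      rw [hK] at hTa hTb
      obtain ⟨h, h1, h2, h3⟩ := hTa
      obtain ⟨k, k1, k2, k3⟩ := hTb
      obtain ⟨w', w1, w2, w3⟩ := Hs p r (by omega) hp (h - k)
        (fun z => sub_mem (hGaI _ (h1 z)) (hGbI _ (k1 z)))
        (fun z => by simp [h2, k2]) (fun z => by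
          have hK : i + 1 - (p + 1) = (i - (p + 1)) + 1 := by omega
          rw [hK] at h3 k3
          obtain ⟨h', h1', h2', -⟩ := h3
          obtain ⟨k', k1', k2', -⟩ := k3
          exact ⟨h' z - k' z, sub_mem (hGaI _ (h1' z)) (hGbI _ (k1' z)), by simp [h2', k2']⟩)
      obtain ⟨v, v1, v2⟩ := lift_lemma (d r) (GI r) ((h - k) - w' ∘ₗ b p)
        (fun z => by simpa using w3 z)
      obtain ⟨x, y, hx, hy, hxy⟩ := split v v1
      obtain ⟨e, f, he, hf, hef⟩ := split w' w1
      have key : ∀ z, h z - e (b p z) - d r (x z) = k z - f (b p z) - d r (y z) := fun z => by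
        have := v2 z
        simp only [LinearMap.sub_apply, LinearMap.comp_apply] at this
        rw [hxy, map_sub, hef] at this
        rw [← sub_eq_zero, ← neg_eq_zero]
        rw [← sub_eq_zero] at this
        rw [← this]
        abel
      refine ⟨h - e ∘ₗ b p - d r ∘ₗ x, fun z => sub_mem (sub_mem (h1 z) (he _)) (hGad _ _ (hx z)),
        fun z => ?_, .succ (u - d _ ∘ₗ e) _ (uR.congr b d fun z => by simp [hdd])
          fun z => by simp [hdd, h2], ?_, ?_⟩
      · simp only [LinearMap.sub_apply, LinearMap.comp_apply]
        rw [key]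
        exact sub_mem (sub_mem (k1 z) (hf _)) (hGbd _ _ (hy z))
      · exact Tow.sub b d hbb h3 _ x hx fun z => by simp [hbb]
      · exact Tow.sub b d hbb k3 _ y hy fun z => by simpa [hbb] using key (b (p + 1) z)
  have inv2 : ∀ p, i ≤ p → ∀ q, p + q = m → ∃ u : P p →ₗ[R] J q, (∀ z, u z ∈ Ga q) ∧
      (∀ z, u z ∈ Gb q) ∧ Rel b d φ p q u ∧ ∀ z, d q (u (b p z)) = 0 := by
    intro p hp
    induction p, hp using Nat.le_induction with
    | base =>
      intro q hq
      obtain ⟨u, ua, ub, uR, hTa, hTb⟩ := inv i le_rfl q hq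
      refine ⟨u, ua, ub, uR, fun z => ?_⟩
      obtain ⟨r, rfl⟩ : ∃ r, q = r + 1 := ⟨q - 1, by omega⟩
      rw [show i + 1 - i = 0 + 1 by omega] at hTa
      obtain ⟨h', -, h2', -⟩ := hTa
      rw [← h2', hdd]
    | succ p hp ih =>
      intro q hq
      obtain ⟨u, ua, ub, uR, hu⟩ := ih (q + 1) (by omega)
      obtain ⟨u', h1, h2⟩ := lift_lemma (d q) (Ga q ⊓ Gb q) (u ∘ₗ b p) (fun z => by
        obtain ⟨y, y1, y2, y3⟩ := Hab q (by omega) (u (b p z)) (hu z) (ua _) (ub _)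
        exact ⟨y, ⟨y1, y2⟩, y3⟩)
      exact ⟨u', fun z => (h1 z).1, fun z => (h1 z).2, .succ u u' uR h2, fun z => by
        rw [h2]; simp [hbb]⟩
  obtain ⟨u, ua, ub, uR, hu⟩ := inv2 m (by omega) 0 (by omega)
  exact uR.descend b d hJ hb hdd fun z => Hab0 _ (hu z) (ua _) (ub _)

end Chase

end LyuConn

namespace LyuConn

section Res

open Abelian

variable {R : Type u} [CommRing R] {M N : Type u} [AddCommGroup M] [Module R M]
  [AddCommGroup N] [Module R N]

/-- terms of an injective resolution -/
abbrev jX (J : InjectiveResolution (ModuleCat.of R N)) (q : ℕ) : Type u := J.cocomplex.X q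

/-- differential of an injective resolution -/
abbrev jd (J : InjectiveResolution (ModuleCat.of R N)) (q : ℕ) : jX J q →ₗ[R] jX J (q + 1) :=
  (J.cocomplex.d q (q + 1)).hom

/-- terms of a projective resolution -/
abbrev pX (P : ProjectiveResolution (ModuleCat.of R N)) (q : ℕ) : Type u := P.complex.X q

/-- differential of a projective resolution -/
abbrev pb (P : ProjectiveResolution (ModuleCat.of R N)) (q : ℕ) : pX P (q + 1) →ₗ[R] pX P q :=
  (P.complex.d (q + 1) q).hom

/-- augmentation -/
def pe (P : ProjectiveResolution (ModuleCat.of R N)) : pX P 0 →ₗ[R] N :=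
  (P.π.f 0 ≫ (HomologicalComplex.singleObjXSelf (ComplexShape.down ℕ) 0 (ModuleCat.of R N)).hom).hom

lemma pX_proj (P : ProjectiveResolution (ModuleCat.of R N)) (p : ℕ) :
    Module.Projective R (pX P p) :=
  (IsProjective.iff_projective (P.complex.X p)).mpr (P.projective p)

lemma jX_inj (J : InjectiveResolution (ModuleCat.of R N)) (q : ℕ) :
    Module.Injective R (jX J q) :=
  (Module.injective_iff_injective_object R (J.cocomplex.X q)).mpr (J.injective q)

lemma jdd (J : InjectiveResolution (ModuleCat.of R N)) (q : ℕ) (z : jX J q) :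
    jd J (q + 1) (jd J q z) = 0 := by
  have := J.cocomplex.d_comp_d q (q + 1) (q + 2)
  exact congr($(this) z)

lemma pbb (P : ProjectiveResolution (ModuleCat.of R N)) (p : ℕ) (z : pX P (p + 2)) :
    pb P p (pb P (p + 1) z) = 0 := by
  have := P.complex.d_comp_d (p + 2) (p + 1) p
  exact congr($(this) z)

lemma pb_exact (P : ProjectiveResolution (ModuleCat.of R N)) (p : ℕ) (z : pX P (p + 1))
    (hz : pb P p z = 0) : ∃ y, pb P (p + 1) y = z := by
  have := P.exact_succ p
  rw [ShortComplex.moduleCat_exact_iff] at this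
  exact this z hz

lemma pe_surj (P : ProjectiveResolution (ModuleCat.of R N)) : Function.Surjective (pe P) := by
  have h : Epi (P.π.f 0 ≫ (HomologicalComplex.singleObjXSelf (ComplexShape.down ℕ) 0
    (ModuleCat.of R N)).hom) := inferInstance
  exact (ModuleCat.epi_iff_surjective _).mp h

lemma pe_pb (P : ProjectiveResolution (ModuleCat.of R N)) (z : pX P 1) :
    pe P (pb P 0 z) = 0 := by
  have := P.complex_d_comp_π_f_zero
  have h2 : P.complex.d 1 0 ≫ P.π.f 0 ≫ (HomologicalComplex.singleObjXSelf
    (ComplexShape.down ℕ) 0 (ModuleCat.of R N)).hom = 0 := by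
    rw [← Category.assoc, this, Limits.zero_comp]
  exact congr($(h2) z)

lemma pe_exact (P : ProjectiveResolution (ModuleCat.of R N)) (z : pX P 0) (hz : pe P z = 0) :
    ∃ y, pb P 0 y = z := by
  have := P.exact₀
  rw [ShortComplex.moduleCat_exact_iff] at this
  refine this z ?_
  have h2 : Mono (HomologicalComplex.singleObjXSelf (ComplexShape.down ℕ) 0
    (ModuleCat.of R N)).hom := inferInstance
  rw [ModuleCat.mono_iff_injective] at h2
  refine h2 ?_
  rw [map_zero]
  exact hz

lemma V.bdry (J : InjectiveResolution (ModuleCat.of R N)) {q : ℕ} (h : V R M N (q + 1))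
    (f : M →ₗ[R] jX J (q + 1)) (hf : ∀ z, jd J _ (f z) = 0) :
    ∃ y : M →ₗ[R] jX J q, ∀ z, jd J q (y z) = f z := by
  have hf' : ModuleCat.ofHom f ≫ J.cocomplex.d (q + 1) (q + 2) = 0 := by
    ext z; exact hf z
  obtain ⟨g, hg⟩ := (J.extMk_eq_zero_iff _ _ rfl hf' q rfl).mp (h _)
  exact ⟨g.hom, fun z => congr($(hg) z)⟩

lemma jX_zero (J : InjectiveResolution (ModuleCat.of R N)) : ∃ η : N →ₗ[R] jX J 0,
    Function.Injective η ∧ ∀ z, jd J 0 z = 0 → ∃ y, η y = z := by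
  refine ⟨((HomologicalComplex.singleObjXSelf (ComplexShape.up ℕ) 0 (ModuleCat.of R N)).inv ≫
    J.ι.f 0).hom, ?_, fun z hz => ?_⟩
  · have h : Mono ((HomologicalComplex.singleObjXSelf (ComplexShape.up ℕ) 0
      (ModuleCat.of R N)).inv ≫ J.ι.f 0) := inferInstance
    exact (ModuleCat.mono_iff_injective _).mp h
  · have := J.exact₀
    rw [ShortComplex.moduleCat_exact_iff] at this
    obtain ⟨y, hy⟩ := this z hz
    refine ⟨(HomologicalComplex.singleObjXSelf (ComplexShape.up ℕ) 0 (ModuleCat.of R N)).hom y, ?_⟩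
    rw [← hy]
    simp only [HomologicalComplex.singleObjXSelf]
    erw [Category.id_comp]
    rfl

lemma V.zero_hom (h : V R M N 0) (f : M →ₗ[R] N) : f = 0 := by
  have h1 := h (Ext.mk₀ (ModuleCat.ofHom f))
  rw [← Ext.mk₀_zero] at h1
  have := Ext.homEquiv₀.symm.injective h1
  exact congr($(this).hom)

lemma V.bdry0 (J : InjectiveResolution (ModuleCat.of R N)) (h : V R M N 0)
    (f : M →ₗ[R] jX J 0) (hf : ∀ z, jd J _ (f z) = 0) (z : M) : f z = 0 := by
  obtain ⟨η, h1, h2⟩ := jX_zero J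
  have hr : ∀ z, f z ∈ LinearMap.range η := fun z => h2 _ (hf z)
  let e := LinearEquiv.ofInjective η h1
  have := h.zero_hom (e.symm.toLinearMap ∘ₗ f.codRestrict _ hr)
  have h3 := congr($(this) z)
  simp at h3
  exact congrArg Subtype.val h3

lemma V.of_bdry (J : InjectiveResolution (ModuleCat.of R N)) {q : ℕ}
    (h : ∀ f : M →ₗ[R] jX J (q + 1), (∀ z, jd J _ (f z) = 0) →
      ∃ y : M →ₗ[R] jX J q, ∀ z, jd J q (y z) = f z) : V R M N (q + 1) := by
  intro x
  obtain ⟨f, hf, rfl⟩ := J.extMk_surjective x _ rfl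
  rw [J.extMk_eq_zero_iff _ _ rfl hf q rfl]
  obtain ⟨y, hy⟩ := h f.hom (fun z => congr($(hf) z))
  exact ⟨ModuleCat.ofHom y, by ext z; exact hy z⟩

/-- vanishing via projective resolutions -/
lemma V.pbdry (P : ProjectiveResolution (ModuleCat.of R M)) {p : ℕ} (h : V R M N (p + 1))
    (f : pX P (p + 1) →ₗ[R] N) (hf : ∀ z, f (pb P _ z) = 0) :
    ∃ y : pX P p →ₗ[R] N, ∀ z, y (pb P p z) = f z := by
  have hf' : P.complex.d (p + 2) (p + 1) ≫ ModuleCat.ofHom f = 0 := by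
    ext z; exact hf z
  obtain ⟨g, hg⟩ := (P.extMk_eq_zero_iff (ModuleCat.ofHom f) _ rfl hf' p rfl).mp (h _)
  exact ⟨g.hom, fun z => congr($(hg) z)⟩

lemma V.pbdry0 (P : ProjectiveResolution (ModuleCat.of R M)) (h : V R M N 0)
    (f : pX P 0 →ₗ[R] N) (hf : ∀ z, f (pb P 0 z) = 0) (z : pX P 0) : f z = 0 := by
  have hk : LinearMap.ker (pe P) ≤ LinearMap.ker f := by
    intro z hz
    obtain ⟨y, rfl⟩ := pe_exact P z hz
    exact hf y
  let e := LinearMap.quotKerEquivOfSurjective (pe P) (pe_surj P)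
  have := h.zero_hom ((LinearMap.ker (pe P)).liftQ f hk ∘ₗ e.symm.toLinearMap)
  have h3 := congr($(this) (pe P z))
  have h4 : e.symm (pe P z) = Submodule.Quotient.mk z := by
    rw [LinearEquiv.symm_apply_eq]; rfl
  simpa [h4] using h3

end Res

end LyuConn

namespace LyuConn

section Gam

variable {R : Type u} [CommRing R]

/-- torsion with respect to an ideal -/
def Gam (c : Ideal R) (X : Type*) [AddCommGroup X] [Module R X] : Submodule R X where
  carrier := {z | ∃ t : ℕ, ∀ x ∈ c ^ t, x • z = 0}
  zero_mem' := ⟨0, fun x _ => smul_zero x⟩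
  add_mem' := by
    rintro y z ⟨s, hs⟩ ⟨t, ht⟩
    refine ⟨s + t, fun x hx => ?_⟩
    rw [smul_add, hs x (Ideal.pow_le_pow_right (by omega) hx),
      ht x (Ideal.pow_le_pow_right (by omega) hx), add_zero]
  smul_mem' := by
    rintro r z ⟨t, ht⟩
    exact ⟨t, fun x hx => by rw [smul_comm, ht x hx, smul_zero]⟩

lemma Gam.mem {c : Ideal R} {X : Type*} [AddCommGroup X] [Module R X] {z : X} :
    z ∈ Gam c X ↔ ∃ t : ℕ, ∀ x ∈ c ^ t, x • z = 0 := Iff.rfl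

lemma Gam.map {c : Ideal R} {X Y : Type*} [AddCommGroup X] [Module R X] [AddCommGroup Y]
    [Module R Y] (f : X →ₗ[R] Y) {z : X} (hz : z ∈ Gam c X) : f z ∈ Gam c Y := by
  obtain ⟨t, ht⟩ := hz
  exact ⟨t, fun x hx => by rw [← map_smul, ht x hx, map_zero]⟩

lemma Gam.anti {c c' : Ideal R} (h : c ≤ c') (X : Type*) [AddCommGroup X] [Module R X] :
    Gam c' X ≤ Gam c X := by
  rintro z ⟨t, ht⟩
  exact ⟨t, fun x hx => ht x (Ideal.pow_right_mono h t hx)⟩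

/-- map from a cyclic module -/
def cyc (c : Ideal R) {X : Type*} [AddCommGroup X] [Module R X] (z : X)
    (hz : ∀ x ∈ c, x • z = 0) : (R ⧸ c) →ₗ[R] X :=
  Submodule.liftQ c (LinearMap.toSpanSingleton R X z) (fun x hx => hz x hx)

@[simp] lemma cyc_mk (c : Ideal R) {X : Type*} [AddCommGroup X] [Module R X] (z : X)
    (hz : ∀ x ∈ c, x • z = 0) (r : R) : cyc c z hz (Submodule.Quotient.mk r) = r • z := rfl

lemma kill_one (c : Ideal R) {X : Type*} [AddCommGroup X] [Module R X] (f : (R ⧸ c) →ₗ[R] X)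
    (x : R) (hx : x ∈ c) : x • f (Submodule.Quotient.mk 1) = 0 := by
  rw [← map_smul, ← Submodule.Quotient.mk_smul, smul_eq_mul, mul_one,
    (Submodule.Quotient.mk_eq_zero c).mpr hx, map_zero]

lemma apply_mk (c : Ideal R) {X : Type*} [AddCommGroup X] [Module R X] (f : (R ⧸ c) →ₗ[R] X)
    (x : R) : f (Submodule.Quotient.mk x) = x • f (Submodule.Quotient.mk 1) := by
  rw [← map_smul, ← Submodule.Quotient.mk_smul, smul_eq_mul, mul_one]

lemma inf_pow_le [IsNoetherianRing R] (a b : Ideal R) (N : ℕ) : ∃ s, a ^ s ⊓ b ^ s ≤ (a * b) ^ N := by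
  obtain ⟨k, hk⟩ := Ideal.exists_pow_inf_eq_pow_smul a (b ^ N : Submodule R R)
  refine ⟨k + N, ?_⟩
  have h1 := hk (k + N) (by omega)
  have h2 : a ^ (k + N) ⊓ b ^ (k + N) ≤ a ^ (k + N) • (⊤ : Submodule R R) ⊓ b ^ N := by
    refine le_inf (inf_le_left.trans ?_) (inf_le_right.trans (Ideal.pow_le_pow_right (by omega)))
    simp
  refine h2.trans ?_
  rw [h1, mul_pow, Nat.add_sub_cancel_left]
  exact Ideal.mul_mono_right inf_le_right

lemma gam_split [IsNoetherianRing R] {a b I : Ideal R} {k : ℕ} (hk : (a ⊓ b) ^ k ≤ I)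
    {X : Type u} [AddCommGroup X] [Module R X] (hX : Module.Injective R X) (z : X)
    (hz : z ∈ Gam I X) : ∃ x ∈ Gam a X, ∃ y ∈ Gam b X, z = x - y := by
  obtain ⟨t, ht⟩ := hz
  obtain ⟨s, hs⟩ := inf_pow_le a b (k * t)
  have h1 : a ^ s ⊓ b ^ s ≤ I ^ t := by
    refine hs.trans ?_
    rw [pow_mul]
    exact Ideal.pow_right_mono ((Ideal.pow_right_mono Ideal.mul_le_inf k).trans hk) t
  let μ : (R ⧸ (a ^ s ⊓ b ^ s)) →ₗ[R] (R ⧸ a ^ s) × (R ⧸ b ^ s) :=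
    cyc _ (Submodule.Quotient.mk 1, Submodule.Quotient.mk 1) (by
      rintro x ⟨h1, h2⟩
      ext
      · change x • (Submodule.Quotient.mk 1 : R ⧸ a ^ s) = 0
        rw [← Submodule.Quotient.mk_smul, Submodule.Quotient.mk_eq_zero]
        simpa using h1
      · change x • (Submodule.Quotient.mk 1 : R ⧸ b ^ s) = 0
        rw [← Submodule.Quotient.mk_smul, Submodule.Quotient.mk_eq_zero]
        simpa using h2)
  have hμ : Function.Injective μ := by
    rw [← LinearMap.ker_eq_bot, LinearMap.ker_eq_bot']
    intro x hx
    obtain ⟨x, rfl⟩ := Submodule.Quotient.mk_surjective _ x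
    rw [cyc_mk] at hx
    have e1 : x • (Submodule.Quotient.mk 1 : R ⧸ a ^ s) = 0 := congrArg Prod.fst hx
    have e2 : x • (Submodule.Quotient.mk 1 : R ⧸ b ^ s) = 0 := congrArg Prod.snd hx
    rw [← Submodule.Quotient.mk_smul, Submodule.Quotient.mk_eq_zero, smul_eq_mul, mul_one] at e1 e2
    rw [Submodule.Quotient.mk_eq_zero]
    exact ⟨e1, e2⟩
  obtain ⟨h, hh⟩ := hX.out μ hμ (cyc _ z fun x hx => ht x (h1 hx))
  refine ⟨h (Submodule.Quotient.mk 1, 0), ⟨s, fun x hx => ?_⟩,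
    - h (0, Submodule.Quotient.mk 1), neg_mem ⟨s, fun x hx => ?_⟩, ?_⟩
  · exact kill_one (a ^ s) (h ∘ₗ LinearMap.inl R _ _) x hx
  · exact kill_one (b ^ s) (h ∘ₗ LinearMap.inr R _ _) x hx
  · have := hh (Submodule.Quotient.mk 1)
    rw [cyc_mk, one_smul, cyc_mk, one_smul] at this
    rw [← this, sub_neg_eq_add, ← map_add]
    simp

lemma V.elt {q : ℕ} {c : Ideal R} (J : InjectiveResolution (ModuleCat.of R R))
    (h : V R (R ⧸ c) R (q + 1)) (z : jX J (q + 1)) (hz : ∀ x ∈ c, x • z = 0)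
    (hd : jd J (q + 1) z = 0) : ∃ y : jX J q, (∀ x ∈ c, x • y = 0) ∧ jd J q y = z := by
  obtain ⟨y, hy⟩ := h.bdry J (cyc c z hz) (fun w => by
    obtain ⟨w, rfl⟩ := Submodule.Quotient.mk_surjective _ w
    rw [cyc_mk, map_smul, hd, smul_zero])
  refine ⟨y (Submodule.Quotient.mk 1), kill_one c y, ?_⟩
  rw [hy, cyc_mk, one_smul]

lemma V.elt0 {c : Ideal R} (J : InjectiveResolution (ModuleCat.of R R))
    (h : V R (R ⧸ c) R 0) (z : jX J 0) (hz : ∀ x ∈ c, x • z = 0)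
    (hd : jd J 0 z = 0) : z = 0 := by
  have := h.bdry0 J (cyc c z hz) (fun w => by
    obtain ⟨w, rfl⟩ := Submodule.Quotient.mk_surjective _ w
    rw [cyc_mk, map_smul, hd, smul_zero]) (Submodule.Quotient.mk 1)
  rwa [cyc_mk, one_smul] at this

lemma dimq_pow (c : Ideal R) (t : ℕ) : ringKrullDim (R ⧸ c ^ t) ≤ ringKrullDim (R ⧸ c) := by
  rcases t with _ | t
  · have : Subsingleton (R ⧸ c ^ 0) := by
      rw [pow_zero, Ideal.one_eq_top]; infer_instance
    rw [ringKrullDim_eq_bot_of_subsingleton]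
    exact bot_le
  · rw [ringKrullDim_quotient, ringKrullDim_quotient, PrimeSpectrum.zeroLocus_pow _ (by omega)]

lemma gam_inf {a b : Ideal R} {X : Type*} [AddCommGroup X] [Module R X] {z : X}
    (ha : z ∈ Gam a X) (hb : z ∈ Gam b X) : ∃ t, ∀ x ∈ (a ⊔ b) ^ t, x • z = 0 := by
  obtain ⟨s, hs⟩ := ha
  obtain ⟨t, ht⟩ := hb
  refine ⟨s + t, fun x hx => ?_⟩
  have := Ideal.sup_pow_add_le_pow_sup_pow hx
  obtain ⟨y, hy, w, hw, rfl⟩ := Submodule.mem_sup.mp this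
  rw [add_smul, hs y hy, ht w hw, add_zero]

section chainres

variable [IsLocalRing R] [IsNoetherianRing R] (J : InjectiveResolution (ModuleCat.of R R))
  {n : ℕ} (hc : RegChain n (maximalIdeal R))
include hc

lemma hab {a b : Ideal R} {i : ℕ} (hi : ringKrullDim (R ⧸ (a ⊔ b)) ≤ i) (q : ℕ) (hq : q + 1 + i < n)
    (z : jX J (q + 1)) (hd : jd J (q + 1) z = 0) (ha : z ∈ Gam a (jX J (q + 1)))
    (hb : z ∈ Gam b (jX J (q + 1))) :
    ∃ y, y ∈ Gam a (jX J q) ∧ y ∈ Gam b (jX J q) ∧ jd J q y = z := by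
  obtain ⟨t, ht⟩ := gam_inf ha hb
  have hV : V R (R ⧸ (a ⊔ b) ^ t) R (q + 1) := V_dim hc i ((a ⊔ b) ^ t) ((dimq_pow _ _).trans hi)
    (R ⧸ (a ⊔ b) ^ t) (fun x hx z => by
      obtain ⟨z, rfl⟩ := Submodule.Quotient.mk_surjective _ z
      rw [← Submodule.Quotient.mk_smul, Submodule.Quotient.mk_eq_zero]
      exact Ideal.mul_mem_right _ _ hx) (q + 1) hq
  obtain ⟨y, h1, h2⟩ := hV.elt J z ht hd
  exact ⟨y, ⟨t, fun x hx => h1 x (Ideal.pow_right_mono le_sup_left t hx)⟩,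
    ⟨t, fun x hx => h1 x (Ideal.pow_right_mono le_sup_right t hx)⟩, h2⟩

lemma hab0 {a b : Ideal R} {i : ℕ} (hi : ringKrullDim (R ⧸ (a ⊔ b)) ≤ i) (hq : i < n)
    (z : jX J 0) (hd : jd J 0 z = 0) (ha : z ∈ Gam a (jX J 0))
    (hb : z ∈ Gam b (jX J 0)) : z = 0 := by
  obtain ⟨t, ht⟩ := gam_inf ha hb
  have hV : V R (R ⧸ (a ⊔ b) ^ t) R 0 := V_dim hc i ((a ⊔ b) ^ t) ((dimq_pow _ _).trans hi)
    (R ⧸ (a ⊔ b) ^ t) (fun x hx z => by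
      obtain ⟨z, rfl⟩ := Submodule.Quotient.mk_surjective _ z
      rw [← Submodule.Quotient.mk_smul, Submodule.Quotient.mk_eq_zero]
      exact Ideal.mul_mem_right _ _ hx) 0 (by omega)
  exact hV.elt0 J z ht hd

lemma socle {t : ℕ} {q : Ideal R} (hq : maximalIdeal R ^ t ≤ q) {v : R} (hv : v ∉ q)
    (z : jX J n) (hd : jd J n z = 0) (hz : ∀ x ∈ maximalIdeal R, x • z = 0) :
    ∃ w : jX J n, jd J n w = 0 ∧ (∀ x ∈ q, x • w = 0) ∧ v • w = z := by
  -- multiplication by v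
  let S : Submodule R (R ⧸ q) := Submodule.span R {Submodule.Quotient.mk v}
  let μ : R →ₗ[R] S := LinearMap.toSpanSingleton R S ⟨_, Submodule.mem_span_singleton_self _⟩
  have hμs : Function.Surjective μ := by
    rintro ⟨y, hy⟩
    obtain ⟨r, hr⟩ := Submodule.mem_span_singleton.mp hy
    exact ⟨r, Subtype.ext hr⟩
  have hk : LinearMap.ker μ ≤ LinearMap.ker (LinearMap.toSpanSingleton R (jX J n) z) := by
    intro r hr
    have h1 : r • (Submodule.Quotient.mk v : R ⧸ q) = 0 := congrArg Subtype.val hr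
    rw [← Submodule.Quotient.mk_smul, Submodule.Quotient.mk_eq_zero, smul_eq_mul] at h1
    refine hz r ?_
    by_contra h2
    have : IsUnit r := by simpa using h2
    exact hv ((Ideal.unit_mul_mem_iff_mem q this).mp h1)
  let κ : S →ₗ[R] jX J n := (LinearMap.ker μ).liftQ _ hk ∘ₗ
    (LinearMap.quotKerEquivOfSurjective μ hμs).symm.toLinearMap
  have hκ : ∀ r, κ (μ r) = r • z := by
    intro r
    have h4 : (LinearMap.quotKerEquivOfSurjective μ hμs).symm (μ r) = Submodule.Quotient.mk r := by
      rw [LinearEquiv.symm_apply_eq]; rfl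
    change (LinearMap.ker μ).liftQ _ hk ((LinearMap.quotKerEquivOfSurjective μ hμs).symm (μ r)) = _
    rw [h4]; rfl
  obtain ⟨f, hf⟩ := (jX_inj J n).out S.subtype S.injective_subtype κ
  have hdf : S ≤ LinearMap.ker (jd J n ∘ₗ f) := by
    intro s hs
    obtain ⟨r, hr⟩ := hμs ⟨s, hs⟩
    have h1 : f s = κ ⟨s, hs⟩ := hf ⟨s, hs⟩
    rw [LinearMap.mem_ker, LinearMap.comp_apply, h1, ← hr, hκ, map_smul, hd, smul_zero]
  have hV : V R ((R ⧸ q) ⧸ S) R (n + 1) := by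
    refine V_finlen (hc.V_quot (by omega)) _ t fun x hx y => ?_
    obtain ⟨y, rfl⟩ := Submodule.Quotient.mk_surjective _ y
    obtain ⟨y, rfl⟩ := Submodule.Quotient.mk_surjective _ y
    rw [← Submodule.Quotient.mk_smul, ← Submodule.Quotient.mk_smul, smul_eq_mul,
      (Submodule.Quotient.mk_eq_zero q).mpr (Ideal.mul_mem_right _ _ (hq hx)),
      Submodule.Quotient.mk_zero]
  obtain ⟨y, hy⟩ := hV.bdry J (S.liftQ (jd J n ∘ₗ f) hdf) (fun w => by
    obtain ⟨w, rfl⟩ := Submodule.Quotient.mk_surjective _ w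
    exact jdd J n _)
  refine ⟨(f - y ∘ₗ S.mkQ) (Submodule.Quotient.mk 1), ?_, kill_one q _, ?_⟩
  · rw [LinearMap.sub_apply, map_sub, LinearMap.comp_apply, hy]
    exact sub_self _
  · rw [← apply_mk]
    have h0 : S.mkQ (Submodule.Quotient.mk v) = 0 :=
      (Submodule.Quotient.mk_eq_zero S).mpr (Submodule.mem_span_singleton_self _)
    rw [LinearMap.sub_apply, LinearMap.comp_apply, h0, map_zero, sub_zero]
    have h1 := hf (μ 1)
    rw [hκ, one_smul] at h1
    rw [← h1]
    congr 1
    change _ = (1 : R) • (Submodule.Quotient.mk v : R ⧸ q)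
    rw [one_smul]

lemma not_bdry {m : ℕ} (hm : m + 2 = n) : ∃ z : jX J (m + 2), jd J (m + 2) z = 0 ∧
    (∀ x ∈ maximalIdeal R, x • z = 0) ∧
    ∀ t, ∀ y : jX J (m + 1), (∀ x ∈ maximalIdeal R ^ t, x • y = 0) → jd J (m + 1) y ≠ z := by
  subst hm
  have hD := D_k hc
  have h2 := hD.2
  have : ∃ f : (R ⧸ maximalIdeal R) →ₗ[R] jX J (m + 2), (∀ z, jd J _ (f z) = 0) ∧
      ¬ ∃ y : (R ⧸ maximalIdeal R) →ₗ[R] jX J (m + 1), ∀ z, jd J _ (y z) = f z := by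
    by_contra! hcon
    exact h2 (V.of_bdry J hcon)
  obtain ⟨f, hf, hb⟩ := this
  refine ⟨f (Submodule.Quotient.mk 1), hf _, kill_one _ f, fun t y hy he => hb ?_⟩
  -- replace t by t + 1
  let ψ : R →ₗ[R] jX J (m + 1) := LinearMap.toSpanSingleton R _ y
  let K : Submodule R (R ⧸ maximalIdeal R ^ t) :=
    Submodule.map (Submodule.mkQ (maximalIdeal R ^ t : Submodule R R)) (maximalIdeal R)
  have hdK : ∀ r ∈ maximalIdeal R, r • jd J _ y = 0 := fun r hr => by
    rw [he]; exact kill_one _ f r hr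
  let Y := cyc (maximalIdeal R ^ t) y hy
  have hV : V R K R (m + 1) := by
    refine V_finlen (hD.1 _ (by omega)) _ t fun x hx y => ?_
    obtain ⟨y, hy⟩ := y
    ext
    obtain ⟨y, rfl⟩ := Submodule.Quotient.mk_surjective _ y
    change x • Submodule.Quotient.mk y = 0
    rw [← Submodule.Quotient.mk_smul, smul_eq_mul,
      (Submodule.Quotient.mk_eq_zero _).mpr (Ideal.mul_mem_right _ _ hx)]
  obtain ⟨u, hu⟩ := hV.bdry J (Y ∘ₗ K.subtype) (by
    rintro ⟨w, r, hr, rfl⟩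
    change jd J _ (r • y) = 0
    rw [map_smul, hdK r hr])
  obtain ⟨u', hu'⟩ := (jX_inj J m).out K.subtype K.injective_subtype u
  let y' : jX J (m + 1) := y - jd J m (u' (Submodule.Quotient.mk 1))
  have hy' : ∀ r ∈ maximalIdeal R, r • y' = 0 := by
    intro r hr
    change r • (y - jd J m (u' (Submodule.Quotient.mk 1))) = 0
    rw [smul_sub, ← map_smul, ← apply_mk]
    have h1 := hu' ⟨Submodule.Quotient.mk r, ⟨r, hr, rfl⟩⟩
    have h3 := hu ⟨Submodule.Quotient.mk r, ⟨r, hr, rfl⟩⟩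
    rw [← h1] at h3
    rw [sub_eq_zero]
    exact h3.symm
  refine ⟨cyc _ y' hy', fun w => ?_⟩
  obtain ⟨w, rfl⟩ := Submodule.Quotient.mk_surjective _ w
  rw [cyc_mk, apply_mk _ f, map_smul, ← he]
  congr 1
  change jd J _ (y - jd J m (u' (Submodule.Quotient.mk 1))) = _
  rw [map_sub, jdd, sub_zero]

end chainres

end Gam

end LyuConn

namespace LyuConn

section MainAlg

variable {R : Type u} [CommRing R]

/-- cocycles with support -/
def Zq (J : InjectiveResolution (ModuleCat.of R R)) (I : Ideal R) (r : ℕ) :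
    Submodule R (jX J (r + 1)) := Gam I (jX J (r + 1)) ⊓ LinearMap.ker (jd J (r + 1))

/-- coboundaries with support -/
def Bq (J : InjectiveResolution (ModuleCat.of R R)) (I : Ideal R) (r : ℕ) :
    Submodule R (Zq J I r) := (Submodule.map (jd J r) (Gam I (jX J r))).comap (Zq J I r).subtype

/-- cohomology with support, concretely -/
abbrev Xq (J : InjectiveResolution (ModuleCat.of R R)) (I : Ideal R) (r : ℕ) : Type u :=
  Zq J I r ⧸ Bq J I r

lemma Xq_eq_zero (J : InjectiveResolution (ModuleCat.of R R)) (I : Ideal R) (r : ℕ)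
    (z : Zq J I r) : (Submodule.Quotient.mk z : Xq J I r) = 0 ↔
      ∃ y ∈ Gam I (jX J r), jd J r y = z := by
  rw [Submodule.Quotient.mk_eq_zero]
  rfl

section tow

variable {P J : ℕ → Type u} [∀ p, AddCommGroup (P p)] [∀ p, Module R (P p)]
  [∀ p, AddCommGroup (J p)] [∀ p, Module R (J p)]
  (b : ∀ p, P (p + 1) →ₗ[R] P p) (d : ∀ q, J q →ₗ[R] J (q + 1))

lemma Tow.map {G G' : ∀ q, Submodule R (J q)} (v : R) (hv : ∀ q, ∀ z ∈ G q, v • z ∈ G' q)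
    {K p q : ℕ} {h : P p →ₗ[R] J q} (hT : Tow b d G K p q h) : Tow b d G' K p q (v • h) := by
  induction K generalizing p q with
  | zero => trivial
  | succ K ih =>
    cases q with
    | zero => exact hT.elim
    | succ q =>
      obtain ⟨h', h1, h2, h3⟩ := hT
      exact ⟨v • h', fun z => hv _ _ (h1 z), fun z => by simp [h2], ih h3⟩

lemma Tow.build [∀ p, Module.Projective R (P p)] (hbb : ∀ p z, b p (b (p + 1) z) = 0)
    {G : ∀ q, Submodule R (J q)} {g : ℕ}
    (hG : ∀ q, g < q + 1 → ∀ z ∈ G (q + 1), d (q + 1) z = 0 → ∃ y ∈ G q, d q y = z)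
    {K p q : ℕ} (hq : g + K ≤ q)
    {h : P p →ₗ[R] J q} (hh : ∀ z, h z ∈ G q) (hd : ∀ z, d q (h (b p z)) = 0) :
    Tow b d G K p q h := by
  induction K generalizing p q with
  | zero => trivial
  | succ K ih =>
    cases q with
    | zero => omega
    | succ q =>
      obtain ⟨h', h1, h2⟩ := lift_lemma (d q) (G q) (h ∘ₗ b p)
        (fun z => hG q (by omega) _ (hh _) (hd _))
      exact ⟨h', h1, h2, ih (by omega) h1 (fun z => by rw [h2]; simp [hbb])⟩

end tow

/-- torsion killed by an ideal -/
def tor (F : Ideal R) (X : Type*) [AddCommGroup X] [Module R X] : Submodule R X where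
  carrier := {z | ∀ x ∈ F, x • z = 0}
  zero_mem' := fun x _ => smul_zero x
  add_mem' := fun hy hz x hx => by rw [smul_add, hy x hx, hz x hx, add_zero]
  smul_mem' := fun r z hz x hx => by rw [smul_comm, hz x hx, smul_zero]

variable [IsLocalRing R] [IsNoetherianRing R] (J : InjectiveResolution (ModuleCat.of R R))
  {m : ℕ} (hc : RegChain (m + 1) (maximalIdeal R))

lemma exists_pow_notMem {F : Ideal R} {v : R} (hv : v ∉ F) :
    ∃ t, v ∉ F ⊔ maximalIdeal R ^ t := by
  by_contra! h
  have hF : F ≠ ⊤ := fun h => hv (h ▸ trivial)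
  have : Nontrivial (R ⧸ F) := Ideal.Quotient.nontrivial_iff.mpr hF
  have h1 := Ideal.iInf_pow_smul_eq_bot_of_isLocalRing (M := R ⧸ F) (maximalIdeal R)
    (maximalIdeal.isMaximal R).ne_top
  apply hv
  rw [← Submodule.Quotient.mk_eq_zero F, ← Submodule.mem_bot R, ← h1, Submodule.mem_iInf]
  intro t
  obtain ⟨y, hy, w, hw, rfl⟩ := Submodule.mem_sup.mp (h t)
  have : (Submodule.Quotient.mk (y + w) : R ⧸ F) = w • Submodule.Quotient.mk 1 := by
    rw [← Submodule.Quotient.mk_smul, smul_eq_mul, mul_one, Submodule.Quotient.mk_add,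
      (Submodule.Quotient.mk_eq_zero F).mpr hy, zero_add]
  rw [this]
  exact Submodule.smul_mem_smul hw trivial

include hc in
lemma tower_exists {a F : Ideal R} {g : ℕ} (hF : RegChain g F) {v : R}
    (hva : ∀ z ∈ a, v * z ∈ F) {i : ℕ} (hg : g + (i + 1) ≤ m) {t : ℕ}
    (hvt : v ∉ F ⊔ maximalIdeal R ^ t)
    (P : ProjectiveResolution (ModuleCat.of R (R ⧸ maximalIdeal R ^ t)))
    (z : jX J (m + 1)) (hd : jd J (m + 1) z = 0) (hz : ∀ x ∈ maximalIdeal R, x • z = 0)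
    (hz' : ∀ x ∈ maximalIdeal R ^ t, x • z = 0) :
    ∃ h : pX P 0 →ₗ[R] jX J m, (∀ y, h y ∈ Gam a (jX J m)) ∧
      (∀ y, jd J m (h y) = cyc _ z hz' (pe P y)) ∧
      Tow (pb P) (jd J) (fun q => Gam a (jX J q)) (i + 1) 0 m h := by
  have := pX_proj P
  obtain ⟨w, hw1, hw2, hw3⟩ := socle J hc le_sup_right hvt z hd hz
  let ξ := cyc (maximalIdeal R ^ t) w (fun x hx => hw2 x (Ideal.mem_sup_right hx))
  have hG : ∀ q, g < q + 1 → ∀ z ∈ tor F (jX J (q + 1)), jd J (q + 1) z = 0 →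
      ∃ y ∈ tor F (jX J q), jd J q y = z := fun q hq z hz hd =>
    (hF.V_quot hq).elt J z hz hd
  have hξ : ∀ y, ξ y ∈ tor F (jX J (m + 1)) ∧ jd J _ (ξ y) = 0 ∧ v • ξ y = cyc _ z hz' y := by
    intro y
    obtain ⟨y, rfl⟩ := Submodule.Quotient.mk_surjective _ y
    refine ⟨?_, ?_, ?_⟩
    · exact Submodule.smul_mem _ _ (fun x hx => hw2 x (Ideal.mem_sup_left hx))
    · rw [cyc_mk, map_smul, hw1, smul_zero]
    · rw [cyc_mk, cyc_mk, smul_comm, hw3]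
  obtain ⟨l, l1, l2⟩ := lift_lemma (jd J m) (tor F (jX J m)) (ξ ∘ₗ pe P)
    (fun y => hG m (by omega) _ (hξ _).1 (hξ _).2.1)
  have hv : ∀ q, ∀ z ∈ tor F (jX J q), v • z ∈ Gam a (jX J q) := by
    intro q z hz
    refine ⟨1, fun x hx => ?_⟩
    rw [smul_smul, mul_comm]
    exact hz _ (hva x (by simpa using hx))
  refine ⟨v • l, fun y => hv _ _ (l1 y), fun y => ?_, ?_⟩
  · rw [LinearMap.smul_apply, map_smul, l2]
    exact (hξ _).2.2
  · refine Tow.map _ _ (G := fun q => tor F (jX J q)) v hv ?_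
    refine Tow.build _ _ (pbb P) hG hg l1 (fun y => ?_)
    rw [l2, LinearMap.comp_apply, pe_pb, map_zero]

include hc in
theorem main_alg {I a b : Ideal R} (ha : I ≤ a) (hb : I ≤ b) {k : ℕ} (hk : (a ⊓ b) ^ k ≤ I)
    {Fa Fb : Ideal R} {ga gb : ℕ} (hFa : RegChain ga Fa) (hFb : RegChain gb Fb) {va vb : R}
    (hva : va ∉ Fa) (hvb : vb ∉ Fb)
    (hva' : ∀ z ∈ a, va * z ∈ Fa) (hvb' : ∀ z ∈ b, vb * z ∈ Fb)
    {i : ℕ} (hga : ga + (i + 1) ≤ m) (hgb : gb + (i + 1) ≤ m)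
    (hi : ringKrullDim (R ⧸ (a ⊔ b)) ≤ i)
    (hX : ∀ j r, j ≤ i → j + r + 1 = m → V R (R ⧸ maximalIdeal R) (Xq J I r) j) : False := by
  obtain ⟨m', rfl⟩ : ∃ m', m = m' + 1 := ⟨m - 1, by omega⟩
  obtain ⟨z, hz1, hz2, hz3⟩ := not_bdry J hc rfl
  obtain ⟨ta, hta⟩ := exists_pow_notMem hva
  obtain ⟨tb, htb⟩ := exists_pow_notMem hvb
  let t := ta + tb + 1
  have hta' : va ∉ Fa ⊔ maximalIdeal R ^ t := fun h => hta
    ((sup_le_sup_left (Ideal.pow_le_pow_right (by omega : ta ≤ t)) _ :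
      Fa ⊔ maximalIdeal R ^ t ≤ Fa ⊔ maximalIdeal R ^ ta) h)
  have htb' : vb ∉ Fb ⊔ maximalIdeal R ^ t := fun h => htb
    ((sup_le_sup_left (Ideal.pow_le_pow_right (by omega : tb ≤ t)) _ :
      Fb ⊔ maximalIdeal R ^ t ≤ Fb ⊔ maximalIdeal R ^ tb) h)
  have hz' : ∀ x ∈ maximalIdeal R ^ t, x • z = 0 :=
    fun x hx => hz2 x (Ideal.pow_le_self (by omega) hx)
  obtain ⟨P⟩ : Nonempty (ProjectiveResolution (ModuleCat.of R (R ⧸ maximalIdeal R ^ t))) :=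
    ⟨projectiveResolution _⟩
  have := pX_proj P
  have hXN : ∀ j r, j ≤ i → j + r + 1 = m' + 1 →
      V R (R ⧸ maximalIdeal R ^ t) (Xq J I r) j := fun j r h1 h2 =>
    V_finlen (hX j r h1 h2) _ t fun x hx y => by
      obtain ⟨y, rfl⟩ := Submodule.Quotient.mk_surjective _ y
      rw [← Submodule.Quotient.mk_smul, smul_eq_mul,
        (Submodule.Quotient.mk_eq_zero _).mpr (Ideal.mul_mem_right _ _ hx)]
  obtain ⟨u, hu1, hu2⟩ := chase (pb P) (jd J) (jX_inj J) (pbb P) (pb_exact P) (jdd J) (m' + 1) i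
    (by omega) (cyc _ z hz' ∘ₗ pe P) (fun q => Gam a (jX J q)) (fun q => Gam b (jX J q))
    (fun q => Gam I (jX J q)) (fun q z hz => Gam.map _ hz) (fun q z hz => Gam.map _ hz)
    (fun q => Gam.anti ha _) (fun q => Gam.anti hb _)
    (fun q z hz => gam_split hk (jX_inj J q) z hz)
    (tower_exists J hc hFa hva' hga hta' P z hz1 hz2 hz')
    (tower_exists J hc hFb hvb' hgb htb' P z hz1 hz2 hz')
    (by
      intro r hr w hw1 hw2 hw3 y
      let w' : pX P 0 →ₗ[R] Zq J I r := w.codRestrict _ (fun y => ⟨hw1 y, hw2 y⟩)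
      have := (hXN 0 r (by omega) (by omega)).pbdry0 P ((Bq J I r).mkQ ∘ₗ w')
        (fun y => (Xq_eq_zero J I r _).mpr (hw3 y)) y
      exact (Xq_eq_zero J I r _).mp this)
    (by
      intro j r hjr hj w hw1 hw2 hw3
      let w' : pX P (j + 1) →ₗ[R] Zq J I r := w.codRestrict _ (fun y => ⟨hw1 y, hw2 y⟩)
      obtain ⟨f, hf⟩ := (hXN (j + 1) r (by omega) (by omega)).pbdry P ((Bq J I r).mkQ ∘ₗ w')
        (fun y => (Xq_eq_zero J I r _).mpr (hw3 y))
      obtain ⟨f', hf'⟩ := Module.projective_lifting_property (Bq J I r).mkQ f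
        (Submodule.mkQ_surjective _)
      refine ⟨(Zq J I r).subtype ∘ₗ f', fun y => (f' y).2.1, fun y => (f' y).2.2, fun y => ?_⟩
      have h1 : (Bq J I r).mkQ (w' y - f' (pb P j y)) = 0 := by
        rw [map_sub, sub_eq_zero]
        have := hf y
        rw [← hf'] at this
        exact this.symm
      exact (Xq_eq_zero J I r _).mp h1)
    (fun y h1 h2 h3 => hab0 J hc hi (by omega) y h1 h2 h3)
    (fun q hq y h1 h2 h3 => hab J hc hi q (by omega) y h1 h2 h3)
  obtain ⟨p, hp⟩ := pe_surj P (Submodule.Quotient.mk 1)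
  refine hz3 t (u p) (fun x hx => ?_) ?_
  · obtain ⟨y, hy⟩ := pe_exact P (x • p) (by
      rw [map_smul, hp, ← Submodule.Quotient.mk_smul, smul_eq_mul, mul_one,
        Submodule.Quotient.mk_eq_zero]
      exact hx)
    rw [← map_smul, ← hy, hu2]
  · rw [hu1, LinearMap.comp_apply, hp, cyc_mk, one_smul]

end MainAlg

end LyuConn

namespace LyuConn

section OldExt

open Opposite

variable {R : Type u} [CommRing R]

/-- induced map on Hom complexes -/
def lyMap {K L : ChainComplex (ModuleCat.{u} R) ℕ} (φ : K ⟶ L) (Y : ModuleCat.{u} R) :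
    L.linearYonedaObj R Y ⟶ K.linearYonedaObj R Y :=
  (HomologicalComplex.unopFunctor _ _).map
    ((((linearYoneda R (ModuleCat.{u} R)).obj Y).rightOp.mapHomologicalComplex _).map φ).op

lemma lyMap_f {K L : ChainComplex (ModuleCat.{u} R) ℕ} (φ : K ⟶ L) (Y : ModuleCat.{u} R) (q : ℕ)
    (c : L.X q ⟶ Y) : ((lyMap φ Y).f q).hom c = φ.f q ≫ c := rfl

lemma comp_aux {C : Type*} [Category C] {a b c d e f : C} (x : a ⟶ b) (p : b ⟶ c) (q : a ⟶ d)
    (up : e ≅ c) (uq : f ≅ d) (t : d ⟶ c) (m : f ⟶ e) (h2 : x ≫ p = q ≫ t)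
    (h3 : m ≫ up.hom = uq.hom ≫ t) : x ≫ (p ≫ up.inv) = (q ≫ uq.inv) ≫ m := by
  rw [← Category.assoc, h2, Category.assoc, Category.assoc]
  congr 1
  rw [Iso.eq_inv_comp, ← Category.assoc, ← h3, Category.assoc, Iso.hom_inv_id, Category.comp_id]

lemma isoExt_naturality {M M' : ModuleCat.{u} R} (g : M ⟶ M') (P : ProjectiveResolution M)
    (Q : ProjectiveResolution M') (φ : P.complex ⟶ Q.complex)
    (comm : φ.f 0 ≫ Q.π.f 0 = P.π.f 0 ≫ g) (n : ℕ) (Y : ModuleCat.{u} R) :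
    (((_root_.Ext R (ModuleCat.{u} R) n).map g.op).app Y) ≫ (P.isoExt (R := R) n Y).hom =
      (Q.isoExt (R := R) n Y).hom ≫ HomologicalComplex.homologyMap (lyMap φ Y) n := by
  have h1 := ProjectiveResolution.isoLeftDerivedObj_inv_naturality g P Q φ comm
    ((linearYoneda R (ModuleCat.{u} R)).obj Y).rightOp n
  have h2 := congrArg Quiver.Hom.unop h1
  rw [unop_comp, unop_comp] at h2
  have h3 : HomologicalComplex.homologyMap (lyMap φ Y) n ≫
      (HomologicalComplex.homologyUnop ((((linearYoneda R (ModuleCat.{u} R)).obj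
        Y).rightOp.mapHomologicalComplex _).obj P.complex) n).hom =
      (HomologicalComplex.homologyUnop ((((linearYoneda R (ModuleCat.{u} R)).obj
        Y).rightOp.mapHomologicalComplex _).obj Q.complex) n).hom ≫
      ((((linearYoneda R (ModuleCat R)).obj Y).rightOp.mapHomologicalComplex
        (ComplexShape.down ℕ) ⋙ HomologicalComplex.homologyFunctor (ModuleCat R)ᵒᵖ
          (ComplexShape.down ℕ) n).map φ).unop :=
    (congrArg Quiver.Hom.unop
      (HomologicalComplex.homologyOp_hom_naturality (lyMap φ Y) n)).symm
  have h4 : (Q.isoExt (R := R) n Y).hom = (Q.isoLeftDerivedObj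
      ((linearYoneda R (ModuleCat R)).obj Y).rightOp n).inv.unop ≫
      (HomologicalComplex.homologyUnop ((((linearYoneda R (ModuleCat.{u} R)).obj
        Y).rightOp.mapHomologicalComplex _).obj Q.complex) n).inv := rfl
  have h5 : (P.isoExt (R := R) n Y).hom = (P.isoLeftDerivedObj
      ((linearYoneda R (ModuleCat R)).obj Y).rightOp n).inv.unop ≫
      (HomologicalComplex.homologyUnop ((((linearYoneda R (ModuleCat.{u} R)).obj
        Y).rightOp.mapHomologicalComplex _).obj P.complex) n).inv := rfl
  rw [h4, h5]
  exact comp_aux _ _ _ _ _ _ _ h2 h3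

end OldExt

end LyuConn

namespace LyuConn

section Cls

variable {R : Type u} [CommRing R]

/-- class of a cocycle in cohomology -/
def clsK (K : CochainComplex (ModuleCat.{u} R) ℕ) (q : ℕ) :
    LinearMap.ker (K.d q (q + 1)).hom →ₗ[R] K.homology q :=
  (K.liftCycles (A := ModuleCat.of R (LinearMap.ker (K.d q (q + 1)).hom))
    (ModuleCat.ofHom (LinearMap.ker (K.d q (q + 1)).hom).subtype) (q + 1) (by simp)
    (by ext x; exact x.2) ≫ K.homologyπ q).hom

lemma clsK_surj (K : CochainComplex (ModuleCat.{u} R) ℕ) (q : ℕ) :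
    Function.Surjective (clsK K q) := by
  intro x
  obtain ⟨y, rfl⟩ := (ModuleCat.epi_iff_surjective (K.homologyπ q)).mp inferInstance x
  have hy : (K.iCycles q).hom y ∈ LinearMap.ker (K.d q (q + 1)).hom :=
    congr($(K.iCycles_d q (q + 1)) y)
  refine ⟨⟨_, hy⟩, ?_⟩
  change (K.homologyπ q).hom ((K.liftCycles _ _ _ _).hom _) = _
  congr 1
  apply (ModuleCat.mono_iff_injective (K.iCycles q)).mp inferInstance
  exact congr($(K.liftCycles_i (ModuleCat.ofHom (LinearMap.ker (K.d q (q + 1)).hom).subtype)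
    (q + 1) (by simp) (by ext x; exact x.2)) ⟨_, hy⟩)

lemma clsK_zero_succ (K : CochainComplex (ModuleCat.{u} R) ℕ) (p : ℕ)
    (z : LinearMap.ker (K.d (p + 1) (p + 2)).hom) :
    clsK K (p + 1) z = 0 ↔ ∃ y, (K.d p (p + 1)).hom y = z.1 := by
  have hex : (ShortComplex.mk _ _ (K.toCycles_comp_homologyπ p (p + 1))).Exact :=
    ShortComplex.exact_of_g_is_cokernel _ (K.homologyIsCokernel p (p + 1) (by simp))
  rw [ShortComplex.moduleCat_exact_iff] at hex
  have hl := K.liftCycles_i (ModuleCat.ofHom (LinearMap.ker (K.d (p + 1) (p + 2)).hom).subtype)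
    (p + 2) (by simp) (by ext x; exact x.2)
  constructor
  · intro h
    obtain ⟨y, hy⟩ := hex _ h
    refine ⟨y, ?_⟩
    have h1 : (K.iCycles (p + 1)).hom ((K.toCycles p (p + 1)).hom y) = (K.d p (p + 1)).hom y :=
      congr($(K.toCycles_i p (p + 1)) y)
    rw [← h1]
    refine (congrArg (K.iCycles (p + 1)).hom hy).trans ?_
    exact congr($hl z)
  · rintro ⟨y, hy⟩
    have h2 : (K.liftCycles (ModuleCat.ofHom (LinearMap.ker (K.d (p + 1) (p + 2)).hom).subtype)
      (p + 2) (by simp) (by ext x; exact x.2)).hom z = (K.toCycles p (p + 1)).hom y := by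
      apply (ModuleCat.mono_iff_injective (K.iCycles (p + 1))).mp inferInstance
      refine (congr($hl z)).trans ?_
      refine hy.symm.trans ?_
      exact (congr($(K.toCycles_i p (p + 1)) y)).symm
    change (K.homologyπ (p + 1)).hom _ = 0
    refine (congrArg (K.homologyπ (p + 1)).hom h2).trans ?_
    exact congr($(K.toCycles_comp_homologyπ p (p + 1)) y)

lemma clsK_zero_zero (K : CochainComplex (ModuleCat.{u} R) ℕ)
    (z : LinearMap.ker (K.d 0 1).hom) (hz : clsK K 0 z = 0) : z = 0 := by
  have hl := K.liftCycles_i (ModuleCat.ofHom (LinearMap.ker (K.d 0 1).hom).subtype)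
    1 (by simp) (by ext x; exact x.2)
  have hi : IsIso (K.homologyπ 0) := K.isIso_homologyπ 0 0 (by simp) (by simp)
  have h1 : (K.liftCycles (ModuleCat.ofHom (LinearMap.ker (K.d 0 1).hom).subtype)
      1 (by simp) (by ext x; exact x.2)).hom z = 0 := by
    apply (ModuleCat.mono_iff_injective (K.homologyπ 0)).mp inferInstance
    rw [map_zero]
    exact hz
  have h2 := congr($hl z)
  apply Subtype.ext
  refine Eq.trans h2.symm ?_
  exact (congrArg (K.iCycles 0).hom h1).trans (map_zero _)

lemma clsK_map {K L : CochainComplex (ModuleCat.{u} R) ℕ} (φ : K ⟶ L) (q : ℕ)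
    (z : LinearMap.ker (K.d q (q + 1)).hom) (w : LinearMap.ker (L.d q (q + 1)).hom)
    (h : (φ.f q).hom z.1 = w.1) :
    (HomologicalComplex.homologyMap φ q).hom (clsK K q z) = clsK L q w := by
  have h1 : (HomologicalComplex.homologyMap φ q).hom (clsK K q z) =
    (L.homologyπ q).hom ((HomologicalComplex.cyclesMap φ q).hom
     ((K.liftCycles (ModuleCat.ofHom (LinearMap.ker (K.d q (q + 1)).hom).subtype)
      (q + 1) (by simp) (by ext x; exact x.2)).hom z)) :=
    congr($(HomologicalComplex.homologyπ_naturality φ q) _)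
  rw [h1]
  refine congrArg (L.homologyπ q).hom ?_
  apply (ModuleCat.mono_iff_injective (L.iCycles q)).mp inferInstance
  refine (congr($(HomologicalComplex.cyclesMap_i φ q) _)).trans ?_
  refine (congrArg (φ.f q).hom (congr($(K.liftCycles_i (ModuleCat.ofHom (LinearMap.ker
    (K.d q (q + 1)).hom).subtype) (q + 1) (by simp) (by ext x; exact x.2)) z))).trans ?_
  refine h.trans ?_
  exact (congr($(L.liftCycles_i (ModuleCat.ofHom (LinearMap.ker
    (L.d q (q + 1)).hom).subtype) (q + 1) (by simp) (by ext x; exact x.2)) w)).symm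

end Cls

end LyuConn

namespace LyuConn

section OldNew

open Opposite

variable {R : Type u} [CommRing R]

/-- cocycles for a projective resolution -/
def ZP {M : ModuleCat.{u} R} (P : ProjectiveResolution M) (Y : ModuleCat.{u} R) (q : ℕ) :
    Submodule R (P.complex.X q ⟶ Y) :=
  LinearMap.ker ((P.complex.linearYonedaObj R Y).d q (q + 1)).hom

lemma ZP.mem {M : ModuleCat.{u} R} {P : ProjectiveResolution M} {Y : ModuleCat.{u} R} {q : ℕ}
    (c : P.complex.X q ⟶ Y) : c ∈ ZP P Y q ↔ P.complex.d (q + 1) q ≫ c = 0 := Iff.rfl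

/-- derived functor Ext -/
abbrev oE (M Y : ModuleCat.{u} R) (q : ℕ) : ModuleCat.{u} R :=
  ((_root_.Ext R (ModuleCat.{u} R) q).obj (op M)).obj Y

/-- class in the derived functor Ext -/
def oldCls {M : ModuleCat.{u} R} (P : ProjectiveResolution M) (Y : ModuleCat.{u} R) (q : ℕ) :
    ZP P Y q →ₗ[R] oE M Y q :=
  (P.isoExt (R := R) q Y).inv.hom ∘ₗ clsK (P.complex.linearYonedaObj R Y) q

lemma oldCls_surj {M : ModuleCat.{u} R} (P : ProjectiveResolution M) (Y : ModuleCat.{u} R)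
    (q : ℕ) : Function.Surjective (oldCls P Y q) :=
  ((ModuleCat.epi_iff_surjective (P.isoExt (R := R) q Y).inv).mp inferInstance).comp
    (clsK_surj _ _)

lemma oldCls_eq_zero_iff {M : ModuleCat.{u} R} (P : ProjectiveResolution M) (Y : ModuleCat.{u} R)
    (q : ℕ) (z : ZP P Y q) : oldCls P Y q z = 0 ↔
      clsK (P.complex.linearYonedaObj R Y) q z = 0 := by
  have := (ModuleCat.mono_iff_injective (P.isoExt (R := R) q Y).inv).mp inferInstance
  exact map_eq_zero_iff (P.isoExt (R := R) q Y).inv.hom this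

lemma oldCls_zero_succ {M : ModuleCat.{u} R} (P : ProjectiveResolution M) (Y : ModuleCat.{u} R)
    (p : ℕ) (z : ZP P Y (p + 1)) : oldCls P Y (p + 1) z = 0 ↔
      ∃ y : P.complex.X p ⟶ Y, P.complex.d (p + 1) p ≫ y = z.1 :=
  (oldCls_eq_zero_iff P Y _ z).trans (clsK_zero_succ (P.complex.linearYonedaObj R Y) p z)

lemma oldCls_zero_zero {M : ModuleCat.{u} R} (P : ProjectiveResolution M) (Y : ModuleCat.{u} R)
    (z : ZP P Y 0) (h : oldCls P Y 0 z = 0) : z = 0 :=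
  clsK_zero_zero (P.complex.linearYonedaObj R Y) z ((oldCls_eq_zero_iff P Y _ z).mp h)

lemma oldCls_map {M M' : ModuleCat.{u} R} (g : M ⟶ M') (P : ProjectiveResolution M)
    (Q : ProjectiveResolution M') (φ : P.complex ⟶ Q.complex)
    (comm : φ.f 0 ≫ Q.π.f 0 = P.π.f 0 ≫ g) (q : ℕ) (Y : ModuleCat.{u} R)
    (z : ZP Q Y q) (w : ZP P Y q) (h : φ.f q ≫ z.1 = w.1) :
    (((_root_.Ext R (ModuleCat.{u} R) q).map g.op).app Y).hom (oldCls Q Y q z) =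
      oldCls P Y q w := by
  have h1 := clsK_map (lyMap φ Y) q z w h
  have h2 := isoExt_naturality g P Q φ comm q Y
  have h3 : (((_root_.Ext R (ModuleCat.{u} R) q).map g.op).app Y) =
    (Q.isoExt (R := R) q Y).hom ≫ HomologicalComplex.homologyMap (lyMap φ Y) q ≫
    (P.isoExt (R := R) q Y).inv := by
    rw [← Category.assoc, Iso.eq_comp_inv, h2]
  rw [h3]
  have h4 : (Q.isoExt (R := R) q Y).hom.hom (oldCls Q Y q z) =
    clsK (Q.complex.linearYonedaObj R Y) q z :=
    congr($((Q.isoExt (R := R) q Y).inv_hom_id) (clsK (Q.complex.linearYonedaObj R Y) q z))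
  change (P.isoExt (R := R) q Y).inv.hom ((HomologicalComplex.homologyMap (lyMap φ Y) q).hom
    ((Q.isoExt (R := R) q Y).hom.hom (oldCls Q Y q z))) = _
  rw [h4, h1]
  rfl

/-- class in the abelian Ext -/
def newCls {M : ModuleCat.{u} R} (P : ProjectiveResolution M) (Y : ModuleCat.{u} R) (q : ℕ) :
    ZP P Y q →ₗ[R] Abelian.Ext M Y q where
  toFun z := P.extMk z.1 (q + 1) rfl ((ZP.mem _).mp z.2)
  map_add' z w := (P.add_extMk _ _ _ _ _ _).symm
  map_smul' r z := by
    rw [RingHom.id_apply, Abelian.Ext.smul_eq_comp_mk₀, P.extMk_comp_mk₀]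
    congr 1

lemma newCls_apply {M : ModuleCat.{u} R} (P : ProjectiveResolution M) (Y : ModuleCat.{u} R) (q : ℕ)
    (z : ZP P Y q) : newCls P Y q z = P.extMk z.1 (q + 1) rfl ((ZP.mem _).mp z.2) := rfl

lemma newCls_surj {M : ModuleCat.{u} R} (P : ProjectiveResolution M) (Y : ModuleCat.{u} R)
    (q : ℕ) : Function.Surjective (newCls P Y q) := by
  intro x
  obtain ⟨f, hf, rfl⟩ := P.extMk_surjective x (q + 1) rfl
  exact ⟨⟨f, hf⟩, rfl⟩

lemma newCls_zero_succ {M : ModuleCat.{u} R} (P : ProjectiveResolution M) (Y : ModuleCat.{u} R)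
    (p : ℕ) (z : ZP P Y (p + 1)) : newCls P Y (p + 1) z = 0 ↔
      ∃ y : P.complex.X p ⟶ Y, P.complex.d (p + 1) p ≫ y = z.1 :=
  P.extMk_eq_zero_iff z.1 (p + 2) rfl ((ZP.mem _).mp z.2) p rfl

lemma newCls_map {M M' : ModuleCat.{u} R} {g : M ⟶ M'} {P : ProjectiveResolution M}
    {Q : ProjectiveResolution M'} (φ : ProjectiveResolution.Hom P Q g)
    (q : ℕ) (Y : ModuleCat.{u} R)
    (z : ZP Q Y q) (w : ZP P Y q) (h : φ.hom.f q ≫ z.1 = w.1) :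
    (Abelian.Ext.mk₀ g).comp (newCls Q Y q z) (zero_add q) = newCls P Y q w := by
  refine (ProjectiveResolution.mk₀_comp_extMk z.1 (q + 1) rfl ((ZP.mem _).mp z.2) φ).trans ?_
  rw [newCls_apply]
  congr 1

lemma oE_subsing {M Y : ModuleCat.{u} R} {q : ℕ} (h : Subsingleton (oE M Y q))
    (x : Abelian.Ext M Y q) : x = 0 := by
  obtain ⟨z, rfl⟩ := newCls_surj (projectiveResolution M) Y q x
  have h1 : oldCls (projectiveResolution M) Y q z = 0 := Subsingleton.elim _ _
  cases q with
  | zero => rw [oldCls_zero_zero _ _ z h1, map_zero]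
  | succ p => exact (newCls_zero_succ _ _ _ z).mpr ((oldCls_zero_succ _ _ _ z).mp h1)

/-- comparison of cokernel presentations -/
def cmp {Z E E' : Type*} [AddCommGroup Z] [Module R Z] [AddCommGroup E] [Module R E]
    [AddCommGroup E'] [Module R E'] (f : Z →ₗ[R] E) (hf : Function.Surjective f)
    (g : Z →ₗ[R] E') (h : ∀ z, f z = 0 → g z = 0) : E →ₗ[R] E' :=
  Submodule.liftQ (LinearMap.ker f) g (fun z hz => h z hz) ∘ₗ
    (f.quotKerEquivOfSurjective hf).symm.toLinearMap

lemma cmp_apply {Z E E' : Type*} [AddCommGroup Z] [Module R Z] [AddCommGroup E] [Module R E]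
    [AddCommGroup E'] [Module R E'] (f : Z →ₗ[R] E) (hf : Function.Surjective f)
    (g : Z →ₗ[R] E') (h : ∀ z, f z = 0 → g z = 0) (z : Z) : cmp f hf g h (f z) = g z := by
  have : (f.quotKerEquivOfSurjective hf).symm (f z) = Submodule.Quotient.mk z := by
    rw [LinearEquiv.symm_apply_eq]; rfl
  rw [cmp, LinearMap.comp_apply, LinearEquiv.coe_coe, this]
  rfl

/-- new to old Ext -/
def newOld (M Y : ModuleCat.{u} R) (p : ℕ) : Abelian.Ext M Y (p + 1) →ₗ[R] oE M Y (p + 1) :=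
  cmp (newCls (projectiveResolution M) Y (p + 1)) (newCls_surj _ _ _)
    (oldCls (projectiveResolution M) Y (p + 1))
    (fun z hz => (oldCls_zero_succ _ _ _ z).mpr ((newCls_zero_succ _ _ _ z).mp hz))

lemma newOld_newCls (M Y : ModuleCat.{u} R) (p : ℕ) (z) :
    newOld M Y p (newCls (projectiveResolution M) Y (p + 1) z) =
      oldCls (projectiveResolution M) Y (p + 1) z := cmp_apply _ _ _ _ _

lemma newOld_surj (M Y : ModuleCat.{u} R) (p : ℕ) : Function.Surjective (newOld M Y p) := by
  intro x
  obtain ⟨z, rfl⟩ := oldCls_surj (projectiveResolution M) Y (p + 1) x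
  exact ⟨_, newOld_newCls M Y p z⟩

lemma newOld_zero (M Y : ModuleCat.{u} R) (p : ℕ) (x) (h : newOld M Y p x = 0) : x = 0 := by
  obtain ⟨z, rfl⟩ := newCls_surj (projectiveResolution M) Y (p + 1) x
  rw [newOld_newCls] at h
  exact (newCls_zero_succ _ _ _ z).mpr ((oldCls_zero_succ _ _ _ z).mp h)

lemma newOld_map {M M' : ModuleCat.{u} R} (g : M ⟶ M') (Y : ModuleCat.{u} R) (p : ℕ)
    (x : Abelian.Ext M' Y (p + 1)) :
    (((_root_.Ext R (ModuleCat.{u} R) (p + 1)).map g.op).app Y).hom (newOld M' Y p x) =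
      newOld M Y p ((Abelian.Ext.mk₀ g).comp x (zero_add _)) := by
  obtain ⟨z, rfl⟩ := newCls_surj (projectiveResolution M') Y (p + 1) x
  let P := projectiveResolution M
  let Q := projectiveResolution M'
  let φ : ProjectiveResolution.Hom P Q g :=
    { hom := ProjectiveResolution.lift g P Q
      hom_f_zero_comp_π_f_zero := by
        have := ProjectiveResolution.lift_commutes_zero g P Q
        exact this }
  have hw : φ.hom.f (p + 1) ≫ z.1 ∈ ZP P Y (p + 1) := by
    rw [ZP.mem, ← φ.hom.comm_assoc]
    have := z.2
    rw [ZP.mem] at this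
    rw [this, Limits.comp_zero]
  rw [newCls_map φ _ _ z ⟨_, hw⟩ rfl, newOld_newCls, newOld_newCls]
  exact oldCls_map g P Q φ.hom (ProjectiveResolution.lift_commutes_zero g P Q) _ _ z ⟨_, hw⟩ rfl

end OldNew

end LyuConn

namespace LyuConn

section Theta

open Opposite

variable {R : Type u} [CommRing R] (J : InjectiveResolution (ModuleCat.of R R)) (I : Ideal R) (r : ℕ)

/-- cocycles killed by a power -/
def ZJ (t : ℕ) : Submodule R (jX J (r + 1)) where
  carrier := {z | jd J (r + 1) z = 0 ∧ ∀ x ∈ I ^ t, x • z = 0}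
  zero_mem' := ⟨map_zero _, fun x _ => smul_zero x⟩
  add_mem' := by
    rintro y z ⟨h1, h2⟩ ⟨h3, h4⟩
    exact ⟨by rw [map_add, h1, h3, add_zero], fun x hx => by
      rw [smul_add, h2 x hx, h4 x hx, add_zero]⟩
  smul_mem' := by
    rintro c z ⟨h1, h2⟩
    exact ⟨by rw [map_smul, h1, smul_zero], fun x hx => by rw [smul_comm, h2 x hx, smul_zero]⟩

variable {J I r}

/-- the homomorphism from the cyclic module attached to a cocycle -/
def zHom {t : ℕ} (z : ZJ J I r t) : ModuleCat.of R (R ⧸ I ^ t) ⟶ J.cocomplex.X (r + 1) :=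
  ModuleCat.ofHom (cyc (I ^ t) z.1 z.2.2)

lemma zHom_d {t : ℕ} (z : ZJ J I r t) : zHom z ≫ J.cocomplex.d (r + 1) (r + 2) = 0 := by
  ext
  exact (congrArg (jd J (r + 1)) (one_smul R z.1)).trans z.2.1

lemma hom_ext_mk {c : Ideal R} {X : ModuleCat.{u} R} {f g : ModuleCat.of R (R ⧸ c) ⟶ X}
    (h : f.hom (Submodule.Quotient.mk 1) = g.hom (Submodule.Quotient.mk 1)) : f = g := by
  ext
  exact h

lemma zHom_one {t : ℕ} (z : ZJ J I r t) : (zHom z).hom (Submodule.Quotient.mk 1) = z.1 :=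
  one_smul R z.1

variable (J I r)

/-- Ext class of a cocycle -/
def jCls (t : ℕ) : ZJ J I r t →ₗ[R]
    Abelian.Ext (ModuleCat.of R (R ⧸ I ^ t)) (ModuleCat.of R R) (r + 1) where
  toFun z := J.extMk (zHom z) (r + 2) rfl (zHom_d z)
  map_add' z w := by
    rw [J.add_extMk]
    congr 1
    apply hom_ext_mk
    refine (zHom_one _).trans ?_
    exact (congrArg₂ (· + ·) (zHom_one z) (zHom_one w)).symm
  map_smul' c z := by
    have h : ∀ x : Abelian.Ext (ModuleCat.of R (R ⧸ I ^ t)) (ModuleCat.of R R) (r + 1),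
      c • x = (Abelian.Ext.mk₀ (c • 𝟙 _)).comp x (zero_add (r + 1)) := fun x => by
        simp [Abelian.Ext.mk₀_smul]
    rw [RingHom.id_apply, h, J.mk₀_comp_extMk]
    congr 1
    apply hom_ext_mk
    refine (zHom_one _).trans ?_
    have : ((c • 𝟙 (ModuleCat.of R (R ⧸ I ^ t))) ≫ zHom z) = c • zHom z := by simp
    rw [this]
    exact (congrArg (c • ·) (zHom_one z)).symm

lemma jCls_apply (t : ℕ) (z : ZJ J I r t) :
    jCls J I r t z = J.extMk (zHom z) (r + 2) rfl (zHom_d z) := rfl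

lemma jCls_surj (t : ℕ) : Function.Surjective (jCls J I r t) := by
  intro x
  obtain ⟨f, hf, rfl⟩ := J.extMk_surjective x (r + 2) rfl
  refine ⟨⟨f.hom (Submodule.Quotient.mk 1), congr($hf (Submodule.Quotient.mk 1)),
    fun x hx => kill_one _ f.hom x hx⟩, ?_⟩
  rw [jCls_apply]
  congr 1
  apply hom_ext_mk
  exact zHom_one _

lemma jCls_zero (t : ℕ) (z : ZJ J I r t) : jCls J I r t z = 0 ↔
    ∃ y : jX J r, (∀ x ∈ I ^ t, x • y = 0) ∧ jd J r y = z.1 := by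
  rw [jCls_apply, J.extMk_eq_zero_iff _ _ _ _ r rfl]
  constructor
  · rintro ⟨g, hg⟩
    refine ⟨g.hom (Submodule.Quotient.mk 1), fun x hx => kill_one _ g.hom x hx, ?_⟩
    rw [← zHom_one z, ← hg]
    rfl
  · rintro ⟨y, hy, h⟩
    refine ⟨ModuleCat.ofHom (cyc (I ^ t) y hy), ?_⟩
    apply hom_ext_mk
    rw [zHom_one, ← h]
    exact congrArg (jd J r) (one_smul R y)

lemma ZJ_mono {s t : ℕ} (h : s ≤ t) : ZJ J I r s ≤ ZJ J I r t :=
  fun _ hz => ⟨hz.1, fun x hx => hz.2 x (Ideal.pow_le_pow_right h hx)⟩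

/-- transition map between cyclic modules -/
def tr {s t : ℕ} (h : s ≤ t) : ModuleCat.of R (R ⧸ I ^ t) ⟶ ModuleCat.of R (R ⧸ I ^ s) :=
  ModuleCat.ofHom (Submodule.mapQ _ _ LinearMap.id (Ideal.pow_le_pow_right h))

lemma jCls_map {s t : ℕ} (h : s ≤ t) (z : ZJ J I r s) :
    (Abelian.Ext.mk₀ (tr I h)).comp (jCls J I r s z) (zero_add _) =
      jCls J I r t ⟨z.1, ZJ_mono J I r h z.2⟩ := by
  rw [jCls_apply, J.mk₀_comp_extMk, jCls_apply]
  congr 1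
  apply hom_ext_mk
  rfl

/-- the derived functor class of a cocycle -/
def al (t : ℕ) : ZJ J I r t →ₗ[R] oE (ModuleCat.of R (R ⧸ I ^ t)) (ModuleCat.of R R) (r + 1) :=
  newOld _ _ r ∘ₗ jCls J I r t

lemma al_surj (t : ℕ) : Function.Surjective (al J I r t) :=
  (newOld_surj _ _ r).comp (jCls_surj J I r t)

lemma al_zero (t : ℕ) (z : ZJ J I r t) : al J I r t z = 0 ↔
    ∃ y : jX J r, (∀ x ∈ I ^ t, x • y = 0) ∧ jd J r y = z.1 := by
  rw [← jCls_zero]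
  constructor
  · exact newOld_zero _ _ _ _
  · intro h
    rw [al, LinearMap.comp_apply, h, map_zero]

lemma al_map {s t : ℕ} (h : s ≤ t) (z : ZJ J I r s) :
    (((_root_.Ext R (ModuleCat.{u} R) (r + 1)).map (tr I h).op).app (ModuleCat.of R R)).hom
      (al J I r s z) = al J I r t ⟨z.1, ZJ_mono J I r h z.2⟩ := by
  rw [al, LinearMap.comp_apply]
  refine (newOld_map (tr I h) _ r _).trans ?_
  rw [jCls_map]
  rfl

/-- map from the cocycles to the concrete local cohomology -/
def zX (t : ℕ) : ZJ J I r t →ₗ[R] Xq J I r :=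
  (Bq J I r).mkQ ∘ₗ Submodule.inclusion (fun _ hz => ⟨⟨t, hz.2⟩, hz.1⟩)

lemma zX_zero (t : ℕ) (z : ZJ J I r t) : zX J I r t z = 0 ↔
    ∃ y ∈ Gam I (jX J r), jd J r y = z.1 := Xq_eq_zero J I r _

/-- comparison map -/
def th (t : ℕ) : oE (ModuleCat.of R (R ⧸ I ^ t)) (ModuleCat.of R R) (r + 1) →ₗ[R] Xq J I r :=
  cmp (al J I r t) (al_surj J I r t) (zX J I r t) (fun z hz => by
    obtain ⟨y, hy, h⟩ := (al_zero J I r t z).mp hz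
    exact (zX_zero J I r t z).mpr ⟨y, ⟨t, hy⟩, h⟩)

lemma th_al (t : ℕ) (z : ZJ J I r t) : th J I r t (al J I r t z) = zX J I r t z :=
  cmp_apply _ _ _ _ _

lemma th_map {s t : ℕ} (h : s ≤ t) (x) :
    th J I r t ((((_root_.Ext R (ModuleCat.{u} R) (r + 1)).map (tr I h).op).app
      (ModuleCat.of R R)).hom x) = th J I r s x := by
  obtain ⟨z, rfl⟩ := al_surj J I r s x
  rw [al_map, th_al, th_al]
  rfl

lemma th_surj (x : Xq J I r) : ∃ t y, th J I r t y = x := by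
  obtain ⟨⟨z, ⟨t, ht⟩, h⟩, rfl⟩ := Submodule.Quotient.mk_surjective _ x
  refine ⟨t, al J I r t ⟨z, h, ht⟩, ?_⟩
  rw [th_al]
  rfl

lemma th_zero (s : ℕ) (x) (hx : th J I r s x = 0) : ∃ t, ∃ h : s ≤ t,
    (((_root_.Ext R (ModuleCat.{u} R) (r + 1)).map (tr I h).op).app
      (ModuleCat.of R R)).hom x = 0 := by
  obtain ⟨z, rfl⟩ := al_surj J I r s x
  rw [th_al, zX_zero] at hx
  obtain ⟨y, ⟨t, ht⟩, h⟩ := hx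
  refine ⟨s + t, by omega, ?_⟩
  rw [al_map, al_zero]
  exact ⟨y, fun x hx => ht x (Ideal.pow_le_pow_right (by omega) hx), h⟩

end Theta

end LyuConn

namespace LyuConn

section LC

open Opposite Limits

variable {R : Type u} [CommRing R] (J : InjectiveResolution (ModuleCat.of R R)) (I : Ideal R) (r : ℕ)

/-- the diagram computing local cohomology of the ring -/
abbrev lcF : (ℕᵒᵖ)ᵒᵖ ⥤ ModuleCat.{u} R :=
  localCohomology.diagram (localCohomology.idealPowersDiagram I) (r + 1) ⋙
    (evaluation (ModuleCat.{u} R) (ModuleCat.{u} R)).obj (ModuleCat.of R R)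

/-- the concrete cocone -/
def lcC : Cocone (lcF I r) where
  pt := ModuleCat.of R (Xq J I r)
  ι :=
    { app := fun j => ModuleCat.ofHom (th J I r j.unop.unop)
      naturality := fun j j' f => by
        ext x
        exact th_map J I r (leOfHom f.unop.unop) x }

/-- the defining cocone -/
def lcD : Cocone (lcF I r) :=
  have := localCohomology.hasColimitDiagram.{u, 0}
    (localCohomology.idealPowersDiagram I) (r + 1)
  ((evaluation (ModuleCat.{u} R) (ModuleCat.{u} R)).obj (ModuleCat.of R R)).mapCocone
    (colimit.cocone (localCohomology.diagram (localCohomology.idealPowersDiagram I) (r + 1)))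

lemma lcD_pt : (lcD I r).pt = (localCohomology I (r + 1)).obj (ModuleCat.of R R) := rfl

/-- the defining cocone is a colimit -/
def lcDc : IsColimit (lcD I r) :=
  have := localCohomology.hasColimitDiagram.{u, 0}
    (localCohomology.idealPowersDiagram I) (r + 1)
  isColimitOfPreserves _ (colimit.isColimit
    (localCohomology.diagram (localCohomology.idealPowersDiagram I) (r + 1)))

/-- comparison map -/
def lcM : (lcD I r).pt ⟶ ModuleCat.of R (Xq J I r) := (lcDc I r).desc (lcC J I r)

lemma lcM_apply (t : ℕ) (x : (lcF I r).obj (op (op t))) :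
    (lcM J I r).hom (((lcD I r).ι.app (op (op t))).hom x) = th J I r t x :=
  congr($((lcDc I r).fac (lcC J I r) (op (op t))) x)

lemma lc_rep (x : (lcD I r).pt) : ∃ (t : ℕ) (y : (lcF I r).obj (op (op t))),
    ((lcD I r).ι.app (op (op t))).hom y = x := by
  let S : ℕ → Submodule R (lcD I r).pt := fun t =>
    LinearMap.range ((lcD I r).ι.app (op (op t))).hom
  have hmono : Monotone S := by
    rintro s t h _ ⟨y, rfl⟩
    refine ⟨((lcF I r).map (homOfLE h).op.op).hom y, ?_⟩
    have h1 := (lcD I r).w (homOfLE h).op.op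
    exact congr($h1 y)
  have h2 : ModuleCat.ofHom (⨆ t, S t).mkQ = 0 := by
    apply (lcDc I r).hom_ext
    intro j
    ext y
    refine (Submodule.Quotient.mk_eq_zero _).mpr ?_
    exact Submodule.mem_iSup_of_mem j.unop.unop ⟨y, rfl⟩
  have h3 : x ∈ ⨆ t, S t := (Submodule.Quotient.mk_eq_zero _).mp (congr($h2 x))
  rw [Submodule.mem_iSup_of_directed _ hmono.directed_le] at h3
  exact h3

lemma lcM_bij : Function.Bijective (lcM J I r).hom := by
  constructor
  · rw [injective_iff_map_eq_zero]
    intro x hx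
    obtain ⟨s, y, rfl⟩ := lc_rep I r x
    rw [lcM_apply] at hx
    obtain ⟨t, h, ht⟩ := th_zero J I r s y hx
    have h1 := (lcD I r).w (homOfLE h).op.op
    refine (congr($h1 y)).symm.trans ?_
    exact (congrArg ((lcD I r).ι.app (op (op t))).hom ht).trans (map_zero _)
  · intro x
    obtain ⟨t, y, rfl⟩ := th_surj J I r x
    exact ⟨_, lcM_apply J I r t y⟩

/-- concrete description of local cohomology -/
def lcE : (localCohomology I (r + 1)).obj (ModuleCat.of R R) ≃ₗ[R] Xq J I r :=
  LinearEquiv.ofBijective (lcM J I r).hom (lcM_bij J I r)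

end LC

lemma subsing_of_krullDim {R M : Type*} [Ring R] [AddCommGroup M] [Module R M]
    (h : Order.krullDim (Submodule R M) = 0) : Subsingleton M := by
  by_contra hM
  rw [not_subsingleton_iff_nontrivial] at hM
  have h1 : (⊥ : Submodule R M) < ⊤ := bot_lt_top
  have h2 := Order.krullDim_pos_iff.mpr ⟨(⊥ : Submodule R M), ⊤, h1⟩
  rw [h] at h2
  exact absurd h2 (lt_irrefl _)

end LyuConn

namespace LyuConn

section Topo

variable {A : Type u} [CommRing A]

lemma topo_split {d i : ℕ} (hd : ringKrullDim A = d)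
    (hequi : ∀ p ∈ minimalPrimes A, ringKrullDim (A ⧸ p) = ringKrullDim A) (hid : i < d)
    (J : Ideal A) (hJ : ringKrullDim (A ⧸ J) ≤ i)
    (hc : ¬ IsConnected ((PrimeSpectrum.zeroLocus (J : Set A))ᶜ)) :
    ∃ a b : Ideal A, a ⊓ b ≤ nilradical A ∧ (d : WithBot ℕ∞) ≤ ringKrullDim (A ⧸ a) ∧
      (d : WithBot ℕ∞) ≤ ringKrullDim (A ⧸ b) ∧ ringKrullDim (A ⧸ (a ⊔ b)) ≤ i := by
  have hmin : ∀ p ∈ minimalPrimes A, ¬ J ≤ p := by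
    intro p hp h
    have h1 := (dimq_mono h).trans hJ
    rw [hequi p hp, hd] at h1
    exact absurd (by exact_mod_cast h1 : d ≤ i) (by omega)
  have hex : ∀ q : PrimeSpectrum A, ∃ p ∈ minimalPrimes A, p ≤ q.asIdeal := fun q =>
    (Ideal.exists_minimalPrimes_le (I := ⊥) (J := q.asIdeal) bot_le)
  have hne : ((PrimeSpectrum.zeroLocus (J : Set A))ᶜ).Nonempty := by
    have : Nontrivial A := by
      rw [← not_subsingleton_iff_nontrivial]
      intro h
      rw [ringKrullDim_eq_bot_of_subsingleton] at hd
      exact absurd hd (by simp)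
    obtain ⟨p, hp, _⟩ := hex (Classical.arbitrary _)
    exact ⟨⟨p, hp.1.1⟩, fun h => hmin p hp h⟩
  have hpre : ¬ IsPreconnected ((PrimeSpectrum.zeroLocus (J : Set A))ᶜ) := fun h => hc ⟨hne, h⟩
  rw [isPreconnected_closed_iff] at hpre
  push Not at hpre
  obtain ⟨t, t', ht, ht', hcov, ⟨x, hx1, hx2⟩, ⟨y, hy1, hy2⟩, hdis⟩ := hpre
  rw [PrimeSpectrum.isClosed_iff_zeroLocus_ideal] at ht ht'
  obtain ⟨a, rfl⟩ := ht
  obtain ⟨b, rfl⟩ := ht'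
  have hcov' : ∀ p ∈ minimalPrimes A, a ≤ p ∨ b ≤ p := fun p hp =>
    hcov (show (⟨p, hp.1.1⟩ : PrimeSpectrum A) ∈ _ from fun h => hmin p hp h)
  have hdis' : ∀ q : PrimeSpectrum A, a ≤ q.asIdeal → b ≤ q.asIdeal → J ≤ q.asIdeal := by
    intro q h1 h2
    by_contra h3
    have : q ∈ (∅ : Set (PrimeSpectrum A)) := hdis ▸ ⟨h3, h1, h2⟩
    exact this
  refine ⟨a, b, ?_, ?_, ?_, ?_⟩
  · rw [nilradical_eq_sInf]
    refine le_sInf fun q hq => ?_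
    obtain ⟨p, hp, hpq⟩ := hex ⟨q, hq⟩
    rcases hcov' p hp with h | h
    · exact inf_le_left.trans (h.trans hpq)
    · exact inf_le_right.trans (h.trans hpq)
  · obtain ⟨p, hp, hpq⟩ := hex x
    rcases hcov' p hp with h | h
    · rw [← hd, ← hequi p hp]
      exact dimq_mono h
    · exact absurd (hdis' x hx2 (h.trans hpq)) hx1
  · obtain ⟨p, hp, hpq⟩ := hex y
    rcases hcov' p hp with h | h
    · exact absurd (hdis' y (h.trans hpq) hy2) hy1
    · rw [← hd, ← hequi p hp]
      exact dimq_mono h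
  · have h1 : J ≤ (a ⊔ b).radical := by
      rw [Ideal.radical_eq_sInf]
      refine le_sInf fun q hq => ?_
      exact hdis' ⟨q, hq.2⟩ (le_sup_left.trans hq.1) (le_sup_right.trans hq.1)
    have h2 := (dimq_mono h1).trans hJ
    rw [ringKrullDim_quotient, PrimeSpectrum.zeroLocus_radical] at h2
    rw [ringKrullDim_quotient]
    exact h2

lemma topo_pull {R : Type u} [CommRing R] [IsNoetherianRing R] (π : R →+* A)
    (hπ : Function.Surjective π) (a b : Ideal A) (hab : a ⊓ b ≤ nilradical A) :
    ∃ k, (a.comap π ⊓ b.comap π) ^ k ≤ RingHom.ker π := by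
  apply Ideal.exists_pow_le_of_le_radical_of_fg _ (IsNoetherian.noetherian _)
  intro x hx
  have : π x ∈ nilradical A := hab ⟨hx.1, hx.2⟩
  obtain ⟨k, hk⟩ := this
  exact ⟨k, by simpa using hk⟩

lemma dim_comap {R : Type u} [CommRing R] (π : R →+* A)
    (hπ : Function.Surjective π) (a : Ideal A) :
    ringKrullDim (R ⧸ a.comap π) = ringKrullDim (A ⧸ a) :=
  ringKrullDim_eq_of_ringEquiv (RingEquiv.ofBijective (Ideal.quotientMap a π le_rfl)
    ⟨Ideal.quotientMap_injective, Ideal.quotientMap_surjective hπ⟩)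

end Topo

end LyuConn

/-- Let `A` be an equidimensional complete local ring containing a field, of
dimension `d ≥ 2`, with separably closed residue field, presented as `A ≅ R/I`
with `(R, m)` an `n`-dimensional complete regular local ring containing a field.
If the Lyubeznik numbers `λ_{j,j+1}(A)` vanish for all `0 ≤ j ≤ i`, where
`i ≤ d - 2`, then the connectedness dimension of `A` is at least `i + 1`. -/
theorem connDim_ge_of_lyubeznik_vanishing
    (A : Type u) [CommRing A] [IsLocalRing A] [IsNoetherianRing A]
    [IsAdicComplete (IsLocalRing.maximalIdeal A) A]
    (hAfield : ContainsField A) [IsSepClosed (ResidueField A)]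
    (hAequi : ∀ p ∈ minimalPrimes A, ringKrullDim (A ⧸ p) = ringKrullDim A)
    (R : Type u) [CommRing R] [IsLocalRing R] [IsNoetherianRing R]
    [IsAdicComplete (IsLocalRing.maximalIdeal R) R]
    (hRfield : ContainsField R) (hreg : IsRegularLocal R)
    (n : ℕ) (hn : ringKrullDim R = (n : ℕ))
    (I : Ideal R) (e : A ≃+* R ⧸ I)
    (d : ℕ) (hd : 2 ≤ d) (hdimA : ringKrullDim A = (d : ℕ))
    (i : ℕ) (hi : i ≤ d - 2)
    (hvan : ∀ j ≤ i, lyubeznikNumber R I n j (j + 1) = 0) :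
    ((i + 1 : ℕ) : WithBot ℕ∞) ≤ connDim A := by
  by_contra hlt
  rw [not_le, connDim, sInf_lt_iff] at hlt
  obtain ⟨_, ⟨J0, rfl, hJc⟩, hJlt⟩ := hlt
  have hJ : ringKrullDim (A ⧸ J0) ≤ i := by
    rw [Nat.cast_add, Nat.cast_one] at hJlt
    exact ENat.WithBot.lt_add_one_iff.mp hJlt
  obtain ⟨a, b, hab, ha, hb, hs⟩ := LyuConn.topo_split hdimA hAequi (by omega : i < d) J0 hJ hJc
  let π : R →+* A := (e.symm : R ⧸ I →+* A).comp (Ideal.Quotient.mk I)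
  have hπ : Function.Surjective π := e.symm.surjective.comp Ideal.Quotient.mk_surjective
  have hker : RingHom.ker π = I := by
    ext x
    rw [RingHom.mem_ker]
    change e.symm (Ideal.Quotient.mk I x) = 0 ↔ _
    rw [map_eq_zero_iff _ e.symm.injective, Ideal.Quotient.eq_zero_iff_mem]
  obtain ⟨k, hk⟩ := LyuConn.topo_pull π hπ a b hab
  rw [hker] at hk
  have hle : ∀ c : Ideal A, I ≤ c.comap π := fun c => by
    rw [← hker]
    exact Ideal.comap_mono bot_le
  have hda := LyuConn.dim_comap π hπ a
  have hdb := LyuConn.dim_comap π hπ b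
  have hds : ringKrullDim (R ⧸ (a.comap π ⊔ b.comap π)) ≤ i := by
    refine le_trans (LyuConn.dimq_mono ?_) ((LyuConn.dim_comap π hπ (a ⊔ b)).le.trans hs)
    intro x hx
    obtain ⟨y, hy, z, hz, h⟩ := Submodule.mem_sup.mp (show π x ∈ a ⊔ b from hx)
    obtain ⟨y, rfl⟩ := hπ y
    have : x - y ∈ b.comap π := by
      rw [Ideal.mem_comap, map_sub, ← h, add_sub_cancel_left]
      exact hz
    rw [← add_sub_cancel y x]
    exact Submodule.add_mem_sup hy this
  rw [← hda] at ha
  rw [← hdb] at hb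
  have hprop : ∀ c : Ideal R, (d : WithBot ℕ∞) ≤ ringKrullDim (R ⧸ c) → c ≤ maximalIdeal R := by
    intro c hc
    apply IsLocalRing.le_maximalIdeal
    rintro rfl
    have : Subsingleton (R ⧸ (⊤ : Ideal R)) := Ideal.Quotient.subsingleton_iff.mpr rfl
    rw [ringKrullDim_eq_bot_of_subsingleton] at hc
    exact absurd hc (by simp)
  have hreg' : LyuConn.Reg (⊥ : Ideal R) n := by
    obtain ⟨s, hs1, hs2⟩ := hreg
    refine ⟨s, ?_, by rw [bot_sup_eq, hs1], ?_⟩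
    · rw [hn] at hs2
      exact (by exact_mod_cast hs2.symm : s.card = n).le
    · rw [← hn]
      exact ringKrullDim_eq_of_ringEquiv (RingEquiv.quotientBot R)
  have hchain : LyuConn.RegChain n (maximalIdeal R) := by
    have := hreg'.chain LyuConn.RegChain.zero
    rwa [Nat.zero_add] at this
  obtain ⟨ga, Fa, va, hFa, hFa', hva, hva'⟩ :=
    LyuConn.RegChain.maximal hn (hprop _ ha)
  obtain ⟨gb, Fb, vb, hFb, hFb', hvb, hvb'⟩ :=
    LyuConn.RegChain.maximal hn (hprop _ hb)
  have hnum : ∀ (g : ℕ) (F c : Ideal R), LyuConn.RegChain g F → F ≤ c →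
      (d : WithBot ℕ∞) ≤ ringKrullDim (R ⧸ c) → d + g ≤ n := by
    intro g F c h1 h2 h3
    have h4 := h1.dim
    rw [hn] at h4
    have h5 := (add_le_add_left (h3.trans (LyuConn.dimq_mono h2)) (g : WithBot ℕ∞)).trans h4
    exact_mod_cast h5
  have hna := hnum ga Fa _ hFa hFa' ha
  have hnb := hnum gb Fb _ hFb hFb' hb
  obtain ⟨m, rfl⟩ : ∃ m, n = m + 1 := ⟨n - 1, by omega⟩
  refine LyuConn.main_alg (injectiveResolution (ModuleCat.of R R)) hchain (hle a) (hle b) hk hFa hFb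
    hva hvb hva' hvb' (i := i) (by omega) (by omega) hds ?_
  intro j r hj hjr
  have h1 := LyuConn.subsing_of_krullDim (hvan j hj)
  have h2 : m + 1 - (j + 1) = r + 1 := by omega
  rw [lyubeznikModule, h2] at h1
  exact LyuConn.V.of_equiv_right (fun x => LyuConn.oE_subsing h1 x)
    (LyuConn.lcE (injectiveResolution (ModuleCat.of R R)) I r)
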